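/- arXiv:1604.00941 — 3 statements merged into one kernel-verified Lean document; each statement's English description precedes it below -/
import Mathlib

section
/- For every τ in the complex upper half-plane ℍ, one has η(8τ)³ = ∑_{n∈ℤ} (4n+1)·e^{2πiτ(4n+1)²}, where the series on the right converges absolutely. (This is the eta-theta identity E₁(τ) = η(8τ)³ = ∑_{n∈ℤ}(4n+1)q^{(4n+1)²} with q = e^{2πiτ}.) -/
open Complex

/-- The Dedekind eta function `η(τ) = e^{πiτ/12} ∏_{n≥1} (1 - e^{2πinτ})`. -/
noncomputable def dedekindEta (τ : ℂ) : ℂ :=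
  Complex.exp ((Real.pi : ℂ) * I * τ / 12) *
    ∏' n : ℕ, (1 - Complex.exp (2 * (Real.pi : ℂ) * I * ((n : ℂ) + 1) * τ))

/-!
The function `χ_k = x⁻ᵏ + ⋯ + xᵏ` satisfies `(x + x⁻¹) χ_k = χ_{k+1} + χ_{k-1}`, so multiplying a
combination of the `χ_k` by `(1 - x t) (1 - x⁻¹ t)` is a three-term recurrence on the coefficients.
With `t = qⁿ⁺¹` this is the recurrence obtained by applying the two `q`-Pascal rules in succession,
whence
`∏_{i=1}^n (1 - x qⁱ) (1 - x⁻¹ qⁱ) = ∑_{k≤n} (-1)ᵏ q^{k(k+1)/2} [2n+1 choose n+k+1]_q χ_k`.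
At `x = 1` one has `χ_k = 2k + 1`, and since `[2n+1 choose n+k+1]_q → ∏ (1 - qⁱ)⁻¹`, letting
`n → ∞` gives Jacobi's identity `∏ (1 - qⁱ)³ = ∑_{k≥0} (-1)ᵏ (2k+1) q^{k(k+1)/2}`. Finally
`(2k+1)² = 8 · k(k+1)/2 + 1`, and `(-1)ᵏ (2k+1)` runs over the numbers `4n + 1`, `n ∈ ℤ`.
-/

open Filter Topology

section GaussBinom

/-- The Gaussian binomial coefficient `[n choose k]_q`, defined by the `q`-Pascal recursion so that
it makes sense for every `q`, in particular at roots of unity. -/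
def gaussBinom {R : Type*} [CommSemiring R] (q : R) : ℕ → ℕ → R
  | _, 0 => 1
  | 0, _ + 1 => 0
  | n + 1, k + 1 => gaussBinom q n k + q ^ (k + 1) * gaussBinom q n (k + 1)

variable {R : Type*} [CommSemiring R] (q : R)

@[simp]
lemma gaussBinom_zero_right (n : ℕ) : gaussBinom q n 0 = 1 := by
  cases n <;> rfl

lemma gaussBinom_succ_succ (n k : ℕ) :
    gaussBinom q (n + 1) (k + 1) = gaussBinom q n k + q ^ (k + 1) * gaussBinom q n (k + 1) :=
  rfl

lemma gaussBinom_eq_zero_of_lt {n k : ℕ} (h : n < k) : gaussBinom q n k = 0 := by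
  induction n generalizing k with
  | zero => obtain ⟨k, rfl⟩ := Nat.exists_eq_add_of_lt h; rfl
  | succ n ih =>
    obtain ⟨k, rfl⟩ := Nat.exists_eq_succ_of_ne_zero (Nat.ne_zero_of_lt h)
    rw [gaussBinom_succ_succ, ih (by lia), ih (by lia), mul_zero, add_zero]

@[simp]
lemma gaussBinom_self (n : ℕ) : gaussBinom q n n = 1 := by
  induction n with
  | zero => rfl
  | succ n ih =>
    rw [gaussBinom_succ_succ, ih, gaussBinom_eq_zero_of_lt q n.lt_succ_self, mul_zero, add_zero]

lemma gaussBinom_add_succ_succ (a b : ℕ) :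
    gaussBinom q (a + b + 1) (a + 1) =
      q ^ b * gaussBinom q (a + b) a + gaussBinom q (a + b) (a + 1) := by
  induction b generalizing a with
  | zero => simp [gaussBinom_eq_zero_of_lt]
  | succ b ihb =>
    induction a with
    | zero =>
      have hb := ihb 0
      simp only [zero_add, gaussBinom_zero_right, mul_one] at hb ⊢
      calc gaussBinom q (b + 1 + 1) 1
        _ = 1 + q * gaussBinom q (b + 1) 1 := by simp [gaussBinom_succ_succ q (b + 1) 0]
        _ = 1 + q * (q ^ b + gaussBinom q b 1) := by rw [hb]
        _ = q ^ (b + 1) + (1 + q * gaussBinom q b 1) := by ring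
        _ = q ^ (b + 1) + gaussBinom q (b + 1) 1 := by simp [gaussBinom_succ_succ q b 0]
    | succ a iha =>
      have hb := ihb (a + 1)
      rw [show a + 1 + b = a + (b + 1) by ring] at hb
      rw [show a + 1 + (b + 1) = a + (b + 1) + 1 by ring]
      set n := a + (b + 1)
      calc gaussBinom q (n + 1 + 1) (a + 2)
        _ = gaussBinom q (n + 1) (a + 1) + q ^ (a + 2) * gaussBinom q (n + 1) (a + 2) := rfl
        _ = (q ^ (b + 1) * gaussBinom q n a + gaussBinom q n (a + 1)) +
              q ^ (a + 2) * (q ^ b * gaussBinom q n (a + 1) + gaussBinom q n (a + 2)) := by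
            rw [iha, hb]
        _ = q ^ (b + 1) * (gaussBinom q n a + q ^ (a + 1) * gaussBinom q n (a + 1)) +
              (gaussBinom q n (a + 1) + q ^ (a + 2) * gaussBinom q n (a + 2)) := by
            ring
        _ = q ^ (b + 1) * gaussBinom q (n + 1) (a + 1) + gaussBinom q (n + 1) (a + 2) := rfl

lemma gaussBinom_add_symm (a b : ℕ) : gaussBinom q (a + b) a = gaussBinom q (a + b) b := by
  induction a generalizing b with
  | zero => simp
  | succ a iha =>
    induction b with
    | zero => simp
    | succ b ihb =>
      rw [show a + 1 + (b + 1) = b + (a + 1) + 1 by ring, gaussBinom_add_succ_succ q b (a + 1),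
        gaussBinom_succ_succ, show b + (a + 1) = a + (b + 1) by ring, iha (b + 1),
        show a + (b + 1) = a + 1 + b by ring, ihb]
      ring

lemma gaussBinom_add_two_add_two (a b : ℕ) :
    gaussBinom q (a + b + 2) (a + 2) =
      (1 + q ^ (a + b + 1)) * gaussBinom q (a + b) (a + 1) +
        q ^ (a + 2) * gaussBinom q (a + b) (a + 2) + q ^ b * gaussBinom q (a + b) a := by
  have h := gaussBinom_add_succ_succ q (a + 1) b
  rw [show a + 1 + b = a + b + 1 by ring, gaussBinom_succ_succ q (a + b) a,
    gaussBinom_succ_succ q (a + b) (a + 1)] at h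
  rw [h]
  ring

end GaussBinom

lemma choose_two_add_two (k : ℕ) : (k + 2).choose 2 = k + 1 + (k + 1).choose 2 := by
  rw [Nat.choose_succ_succ', Nat.choose_one_right]

section QPochhammer

/-- The `q`-Pochhammer symbol `(q; q)_n = (1 - q)(1 - q²)⋯(1 - qⁿ)`. -/
def qPochhammer {R : Type*} [CommRing R] (q : R) (n : ℕ) : R :=
  ∏ i ∈ Finset.range n, (1 - q ^ (i + 1))

variable {R : Type*} [CommRing R] (q : R)

@[simp]
lemma qPochhammer_zero : qPochhammer q 0 = 1 := rfl

lemma qPochhammer_succ (n : ℕ) : qPochhammer q (n + 1) = qPochhammer q n * (1 - q ^ (n + 1)) :=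
  Finset.prod_range_succ ..

lemma gaussBinom_mul_qPochhammer_mul_qPochhammer (a b : ℕ) :
    gaussBinom q (a + b) a * qPochhammer q a * qPochhammer q b = qPochhammer q (a + b) := by
  induction a generalizing b with
  | zero => simp
  | succ a iha =>
    induction b with
    | zero => simp
    | succ b ihb =>
      have ha := iha (b + 1)
      rw [← add_assoc] at ha
      rw [show a + 1 + b = a + b + 1 by ring] at ihb
      rw [show a + 1 + (b + 1) = a + b + 1 + 1 by ring, gaussBinom_succ_succ,
        qPochhammer_succ q (a + b + 1)]
      rw [qPochhammer_succ q a] at ihb ⊢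
      rw [qPochhammer_succ q b] at ha ⊢
      linear_combination (1 - q ^ (a + 1)) * ha + q ^ (a + 1) * (1 - q ^ (b + 1)) * ihb

end QPochhammer

section FiniteJacobi

variable {R : Type*} [CommRing R]

lemma sum_range_mul_of_three_term {s t : R} {χ f g : ℕ → R} (hχ_one : χ 1 = (s + 1) * χ 0)
    (hχ_add_two : ∀ k, χ (k + 2) = s * χ (k + 1) - χ k)
    (hg_zero : g 0 = (1 + t ^ 2) * f 0 + t * (f 0 - f 1))
    (hg_succ : ∀ k, g (k + 1) = (1 + t ^ 2) * f (k + 1) - t * (f k + f (k + 2))) (n : ℕ) :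
    ∑ k ∈ Finset.range (n + 1), χ k * g k =
      (1 - s * t + t ^ 2) * ∑ k ∈ Finset.range (n + 1), χ k * f k +
        t * (χ (n + 1) * f n - χ n * f (n + 1)) := by
  induction n with
  | zero =>
    simp only [zero_add, Finset.sum_range_one, hg_zero, hχ_one]
    ring
  | succ n ih =>
    rw [Finset.sum_range_succ, ih, Finset.sum_range_succ _ (n + 1), hg_succ, hχ_add_two]
    ring

/-- The coefficient of `χ_k = x⁻ᵏ + ⋯ + xᵏ` in the finite Jacobi product
`∏_{i=1}^n (1 - x qⁱ) (1 - x⁻¹ qⁱ)`. -/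
def jacobiCoeff (q : R) (n k : ℕ) : R :=
  (-1) ^ k * q ^ (k + 1).choose 2 * gaussBinom q (2 * n + 1) (n + k + 1)

variable (q : R)

lemma jacobiCoeff_eq_zero_of_lt {n k : ℕ} (h : n < k) : jacobiCoeff q n k = 0 := by
  rw [jacobiCoeff, gaussBinom_eq_zero_of_lt q (by lia), mul_zero]

-- The symmetry of the Gaussian binomial plays the role of the antisymmetry `χ_{-1} = -χ_0`.
lemma jacobiCoeff_succ_zero (n : ℕ) :
    jacobiCoeff q (n + 1) 0 = (1 + (q ^ (n + 1)) ^ 2) * jacobiCoeff q n 0 +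
      q ^ (n + 1) * (jacobiCoeff q n 0 - jacobiCoeff q n 1) := by
  have h_symm := gaussBinom_add_symm q n (n + 1)
  have h_rec := gaussBinom_add_two_add_two q n (n + 1)
  rw [h_symm] at h_rec
  simp only [← add_assoc, ← two_mul] at h_rec
  simp only [jacobiCoeff, show 2 * (n + 1) + 1 = 2 * n + 1 + 2 by ring, add_zero, zero_add,
    one_add_one_eq_two, add_assoc n, h_rec, Nat.choose_self, Nat.choose_succ_self]
  ring

lemma jacobiCoeff_succ_succ (n k : ℕ) :
    jacobiCoeff q (n + 1) (k + 1) = (1 + (q ^ (n + 1)) ^ 2) * jacobiCoeff q n (k + 1) -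
      q ^ (n + 1) * (jacobiCoeff q n k + jacobiCoeff q n (k + 2)) := by
  rcases lt_or_ge n k with hk | hk
  · simp only [jacobiCoeff_eq_zero_of_lt q (show n < k by lia),
      jacobiCoeff_eq_zero_of_lt q (show n < k + 1 by lia),
      jacobiCoeff_eq_zero_of_lt q (show n < k + 2 by lia),
      jacobiCoeff_eq_zero_of_lt q (show n + 1 < k + 1 by lia), mul_zero, add_zero, sub_zero]
  obtain ⟨d, rfl⟩ := Nat.exists_eq_add_of_le hk
  have h_rec := gaussBinom_add_two_add_two q (k + d + k + 1) d
  rw [show k + d + k + 1 + d = 2 * (k + d) + 1 by ring] at h_rec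
  rw [jacobiCoeff, show 2 * (k + d + 1) + 1 = 2 * (k + d) + 1 + 2 by ring,
    show k + d + 1 + (k + 1) + 1 = k + d + k + 1 + 2 by ring, h_rec]
  simp only [jacobiCoeff, choose_two_add_two]
  ring_nf

-- With `s = x + x⁻¹` the factors on the left are `(1 - x qⁱ⁺¹) (1 - x⁻¹ qⁱ⁺¹)`.
theorem prod_eq_sum_mul_jacobiCoeff {s : R} {χ : ℕ → R} (hχ_zero : χ 0 = 1) (hχ_one : χ 1 = s + 1)
    (hχ_add_two : ∀ k, χ (k + 2) = s * χ (k + 1) - χ k) (n : ℕ) :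
    ∏ i ∈ Finset.range n, (1 - s * q ^ (i + 1) + (q ^ (i + 1)) ^ 2) =
      ∑ k ∈ Finset.range (n + 1), χ k * jacobiCoeff q n k := by
  induction n with
  | zero => simp [jacobiCoeff, hχ_zero]
  | succ n ih =>
    have h_step := sum_range_mul_of_three_term (by rw [hχ_one, hχ_zero, mul_one]) hχ_add_two
      (jacobiCoeff_succ_zero q n) (jacobiCoeff_succ_succ q n) (n + 1)
    rw [h_step, Finset.prod_range_succ, ih, Finset.sum_range_succ _ (n + 1),
      jacobiCoeff_eq_zero_of_lt q (show n < n + 1 by lia),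
      jacobiCoeff_eq_zero_of_lt q (show n < n + 1 + 1 by lia)]
    ring

lemma sum_two_mul_add_one_mul_jacobiCoeff (n : ℕ) :
    ∑ k ∈ Finset.range (n + 1), (2 * k + 1) * jacobiCoeff q n k = qPochhammer q n ^ 2 := by
  rw [← prod_eq_sum_mul_jacobiCoeff q (s := 2) (by simp) (by norm_num) fun k ↦ by push_cast; ring,
    qPochhammer, ← Finset.prod_pow]
  exact Finset.prod_congr rfl fun i _ ↦ by ring

end FiniteJacobi

section Limit

variable {K : Type*} [NormedField K] {q : K}

lemma one_sub_pow_succ_ne_zero (hq : ‖q‖ < 1) (n : ℕ) : 1 - q ^ (n + 1) ≠ 0 := by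
  refine sub_ne_zero.2 fun h ↦ (pow_lt_one₀ (norm_nonneg q) hq n.succ_ne_zero).ne ?_
  rw [← norm_pow, ← h, norm_one]

lemma qPochhammer_ne_zero (hq : ‖q‖ < 1) (n : ℕ) : qPochhammer q n ≠ 0 :=
  Finset.prod_ne_zero_iff.2 fun i _ ↦ one_sub_pow_succ_ne_zero hq i

lemma gaussBinom_add_eq_mul_inv (hq : ‖q‖ < 1) (a b : ℕ) :
    gaussBinom q (a + b) a =
      qPochhammer q (a + b) * (qPochhammer q a)⁻¹ * (qPochhammer q b)⁻¹ := by
  have ha := qPochhammer_ne_zero hq a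
  have hb := qPochhammer_ne_zero hq b
  rw [← gaussBinom_mul_qPochhammer_mul_qPochhammer]
  field_simp

lemma summable_norm_neg_pow_succ (hq : ‖q‖ < 1) : Summable fun n : ℕ ↦ ‖-q ^ (n + 1)‖ := by
  simpa using (summable_nat_add_iff 1).2 (summable_geometric_of_lt_one (norm_nonneg q) hq)

lemma summable_norm_jacobi_cube (hq : ‖q‖ < 1) :
    Summable fun k : ℕ ↦ ‖(-1) ^ k * (2 * k + 1) * q ^ (k + 1).choose 2‖ := by
  have h_geom : Summable fun k : ℕ ↦ ‖(2 * k + 1) * q ^ k‖ := by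
    have h₀ := summable_norm_geometric_of_norm_lt_one hq
    have h₁ := (summable_norm_pow_mul_geometric_of_norm_lt_one 1 hq).mul_left ‖(2 : K)‖
    refine (h₁.add h₀).of_nonneg_of_le (fun _ ↦ norm_nonneg _) fun k ↦ ?_
    rw [← norm_mul]
    calc ‖(2 * k + 1) * q ^ k‖
      _ = ‖2 * ((k : K) ^ 1 * q ^ k) + q ^ k‖ := by ring_nf
      _ ≤ ‖2 * ((k : K) ^ 1 * q ^ k)‖ + ‖q ^ k‖ := norm_add_le _ _
  refine h_geom.of_nonneg_of_le (fun _ ↦ norm_nonneg _) fun k ↦ ?_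
  have h_le : k ≤ (k + 1).choose 2 := by
    rw [Nat.choose_succ_succ', Nat.choose_one_right]
    exact Nat.le_add_right _ _
  simp only [norm_mul, norm_pow, norm_neg, norm_one, one_pow, one_mul]
  gcongr ?_ * ?_
  exact pow_le_pow_of_le_one (norm_nonneg q) hq.le h_le

variable [CompleteSpace K]

lemma tprod_one_sub_pow_succ_ne_zero (hq : ‖q‖ < 1) : ∏' n : ℕ, (1 - q ^ (n + 1)) ≠ 0 := by
  have h := tprod_one_add_ne_zero_of_summable (f := fun n ↦ -q ^ (n + 1))
    (fun n ↦ by simpa only [sub_eq_add_neg] using one_sub_pow_succ_ne_zero hq n)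
    (summable_norm_neg_pow_succ hq)
  simpa only [← sub_eq_add_neg] using h

lemma tendsto_qPochhammer (hq : ‖q‖ < 1) :
    Tendsto (qPochhammer q) atTop (𝓝 (∏' n : ℕ, (1 - q ^ (n + 1)))) := by
  have h := multipliable_one_add_of_summable (f := fun n ↦ -q ^ (n + 1))
    (summable_norm_neg_pow_succ hq)
  simp only [← sub_eq_add_neg] at h
  exact h.hasProd.tendsto_prod_nat

lemma tendsto_inv_qPochhammer (hq : ‖q‖ < 1) :
    Tendsto (fun n ↦ (qPochhammer q n)⁻¹) atTop (𝓝 (∏' n : ℕ, (1 - q ^ (n + 1)))⁻¹) :=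
  (tendsto_qPochhammer hq).inv₀ (tprod_one_sub_pow_succ_ne_zero hq)

lemma tendsto_gaussBinom_add (hq : ‖q‖ < 1) {α : Type*} {l : Filter α} {a b : α → ℕ}
    (ha : Tendsto a l atTop) (hb : Tendsto b l atTop) :
    Tendsto (fun x ↦ gaussBinom q (a x + b x) (a x)) l (𝓝 (∏' n : ℕ, (1 - q ^ (n + 1)))⁻¹) := by
  have h := (((tendsto_qPochhammer hq).comp (ha.atTop_add_atTop hb)).mul
    ((tendsto_inv_qPochhammer hq).comp ha)).mul ((tendsto_inv_qPochhammer hq).comp hb)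
  rw [mul_inv_cancel₀ (tprod_one_sub_pow_succ_ne_zero hq), one_mul] at h
  exact h.congr fun x ↦ (gaussBinom_add_eq_mul_inv hq _ _).symm

lemma exists_norm_gaussBinom_le (hq : ‖q‖ < 1) : ∃ C, ∀ n k, ‖gaussBinom q n k‖ ≤ C := by
  obtain ⟨A, hA⟩ := (tendsto_qPochhammer hq).norm.bddAbove_range
  obtain ⟨B, hB⟩ := (tendsto_inv_qPochhammer hq).norm.bddAbove_range
  replace hA (n : ℕ) : ‖qPochhammer q n‖ ≤ A := hA ⟨n, rfl⟩
  replace hB (n : ℕ) : ‖(qPochhammer q n)⁻¹‖ ≤ B := hB ⟨n, rfl⟩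
  have hA_nonneg : 0 ≤ A := (norm_nonneg _).trans (hA 0)
  have hB_nonneg : 0 ≤ B := (norm_nonneg _).trans (hB 0)
  refine ⟨A * B * B, fun n k ↦ ?_⟩
  rcases lt_or_ge n k with hk | hk
  · rw [gaussBinom_eq_zero_of_lt q hk, norm_zero]
    positivity
  · obtain ⟨b, rfl⟩ := Nat.exists_eq_add_of_le hk
    rw [gaussBinom_add_eq_mul_inv hq, norm_mul, norm_mul]
    gcongr
    exacts [hA _, hB _, hB _]

lemma tendsto_jacobiCoeff (hq : ‖q‖ < 1) (k : ℕ) :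
    Tendsto (fun n ↦ jacobiCoeff q n k) atTop
      (𝓝 ((-1) ^ k * q ^ (k + 1).choose 2 * (∏' n : ℕ, (1 - q ^ (n + 1)))⁻¹)) := by
  have ha : Tendsto (fun n ↦ n + (k + 1)) atTop atTop := tendsto_add_atTop_nat (k + 1)
  have hb : Tendsto (fun n ↦ n - k) atTop atTop := tendsto_sub_atTop_nat k
  refine ((tendsto_gaussBinom_add hq ha hb).const_mul _).congr' ?_
  filter_upwards [eventually_ge_atTop k] with n hn
  rw [jacobiCoeff, show n + (k + 1) + (n - k) = 2 * n + 1 by lia, add_assoc n]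

theorem hasSum_jacobi_cube (hq : ‖q‖ < 1) :
    HasSum (fun k : ℕ ↦ (-1) ^ k * (2 * k + 1) * q ^ (k + 1).choose 2)
      ((∏' n : ℕ, (1 - q ^ (n + 1))) ^ 3) := by
  set E := ∏' n : ℕ, (1 - q ^ (n + 1))
  obtain ⟨C, hC⟩ := exists_norm_gaussBinom_le hq
  have h_term (n k : ℕ) : (2 * k + 1) * jacobiCoeff q n k =
      (-1) ^ k * (2 * k + 1) * q ^ (k + 1).choose 2 * gaussBinom q (2 * n + 1) (n + k + 1) := by
    rw [jacobiCoeff]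
    ring
  have h_lim : Tendsto (fun n ↦ ∑' k : ℕ, (2 * k + 1) * jacobiCoeff q n k) atTop
      (𝓝 (∑' k : ℕ, (2 * k + 1) * ((-1) ^ k * q ^ (k + 1).choose 2 * E⁻¹))) := by
    refine tendsto_tsum_of_dominated_convergence ((summable_norm_jacobi_cube hq).mul_right C)
      (fun k ↦ (tendsto_jacobiCoeff hq k).const_mul _) (.of_forall fun n k ↦ ?_)
    rw [h_term, norm_mul]
    gcongr
    exact hC _ _
  have h_tsum (n : ℕ) : ∑' k : ℕ, (2 * k + 1) * jacobiCoeff q n k = qPochhammer q n ^ 2 := by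
    rw [← sum_two_mul_add_one_mul_jacobiCoeff, tsum_eq_sum fun k hk ↦ ?_]
    rw [jacobiCoeff_eq_zero_of_lt q (by simpa using hk), mul_zero]
  have h_eq : (∑' k : ℕ, (-1) ^ k * (2 * k + 1) * q ^ (k + 1).choose 2) * E⁻¹ = E ^ 2 := by
    rw [← tendsto_nhds_unique (h_lim.congr h_tsum) ((tendsto_qPochhammer hq).pow 2),
      ← tsum_mul_right]
    exact tsum_congr fun k ↦ by ring
  rw [pow_succ, ← h_eq, inv_mul_cancel_right₀ (tprod_one_sub_pow_succ_ne_zero hq)]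
  exact (summable_norm_jacobi_cube hq).of_norm.hasSum

end Limit

section Eta

lemma two_mul_add_one_sq_eq (k : ℕ) : (2 * k + 1) ^ 2 = 8 * (k + 1).choose 2 + 1 := by
  induction k with
  | zero => rfl
  | succ k ih =>
    rw [choose_two_add_two]
    linarith

theorem hasSum_dedekindEta_cube {τ : ℂ} (hτ : 0 < τ.im) :
    HasSum (fun k : ℕ ↦ (-1) ^ k * (2 * k + 1) * cexp (Real.pi * I * τ / 4 * (2 * k + 1) ^ 2))
      (dedekindEta τ ^ 3) := by
  set q := cexp (2 * Real.pi * I * τ)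
  have hq : ‖q‖ < 1 := UpperHalfPlane.norm_exp_two_pi_I_lt_one ⟨τ, hτ⟩
  have h_eta : dedekindEta τ ^ 3 =
      cexp (Real.pi * I * τ / 4) * (∏' n : ℕ, (1 - q ^ (n + 1))) ^ 3 := by
    have h_factor (n : ℕ) : cexp (2 * Real.pi * I * (n + 1) * τ) = q ^ (n + 1) := by
      rw [← exp_nat_mul]
      push_cast
      ring_nf
    simp only [dedekindEta, h_factor, mul_pow, ← exp_nat_mul]
    ring_nf
  rw [h_eta]
  refine ((hasSum_jacobi_cube hq).mul_left _).congr_fun fun k ↦ ?_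
  have h_sq : (2 * k + 1 : ℂ) ^ 2 = 8 * (k + 1).choose 2 + 1 := mod_cast two_mul_add_one_sq_eq k
  rw [h_sq, ← exp_nat_mul, mul_left_comm, ← exp_add]
  ring_nf

lemma four_mul_add_one_eq_intEquivNat (n : ℤ) :
    4 * n + 1 = (-1) ^ Equiv.intEquivNat n * (2 * Equiv.intEquivNat n + 1) := by
  rcases n with m | m
  · have h_even : Equiv.intEquivNat (Int.ofNat m) = 2 * m := rfl
    rw [h_even, pow_mul, neg_one_sq, one_pow, Int.ofNat_eq_natCast]
    push_cast
    ring
  · have h_odd : Equiv.intEquivNat (Int.negSucc m) = 2 * m + 1 := rfl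
    rw [h_odd, pow_succ, pow_mul, neg_one_sq, one_pow, Int.negSucc_eq]
    push_cast
    ring

theorem hasSum_int_dedekindEta_cube {τ : ℂ} (hτ : 0 < τ.im) :
    HasSum (fun n : ℤ ↦ (4 * n + 1) * cexp (Real.pi * I * τ / 4 * (4 * n + 1) ^ 2))
      (dedekindEta τ ^ 3) := by
  refine ((Equiv.intEquivNat.hasSum_iff).2 (hasSum_dedekindEta_cube hτ)).congr_fun fun n ↦ ?_
  have h_cast : (4 * n + 1 : ℂ) = (-1) ^ Equiv.intEquivNat n * (2 * Equiv.intEquivNat n + 1) :=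
    mod_cast four_mul_add_one_eq_intEquivNat n
  rw [h_cast, mul_pow, ← pow_mul, mul_comm _ 2, pow_mul, neg_one_sq, one_pow, one_mul]
  rfl

end Eta

/-- `E₁(τ) = η(8τ)³ = ∑_{n ∈ ℤ} (4n+1) e^{2πiτ(4n+1)²}`, with absolute convergence. -/
theorem etaTheta_E1 (τ : ℂ) (hτ : 0 < τ.im) :
    Summable (fun n : ℤ =>
      ‖(4 * (n : ℂ) + 1) * Complex.exp (2 * (Real.pi : ℂ) * I * τ * (4 * (n : ℂ) + 1) ^ 2)‖) ∧
    dedekindEta (8 * τ) ^ 3 =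
      ∑' n : ℤ, (4 * (n : ℂ) + 1) *
        Complex.exp (2 * (Real.pi : ℂ) * I * τ * (4 * (n : ℂ) + 1) ^ 2) := by
  have h := hasSum_int_dedekindEta_cube (τ := 8 * τ) (by simpa using hτ)
  have h_exp : Real.pi * I * (8 * τ) / 4 = 2 * Real.pi * I * τ := by ring
  rw [h_exp] at h
  exact ⟨h.summable.norm, h.tsum_eq.symm⟩
end

section
/- Let τ ∈ ℍ and let b ∈ ℝ with 2b ∉ ℤ. Then the integral of g_{1, b+1/2}(z)/√(−i(z+τ)) along the vertical path from −conj(τ) to i∞ converges and equals −i·e(−τ/8 + b/2)·R(τ/2 − b; τ) + i. That is, i·∫₀^∞ g_{1,b+1/2}(−conj(τ)+it)/√(−i(−conj(τ)+it+τ)) dt = −i·e^{2πi(−τ/8 + b/2)}·R(τ/2 − b; τ) + i. -/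
open Complex

/-- Zwegers' unary theta function
`g_{a,b}(τ) = ∑_{n∈ℤ} (n+a) e^{2πib(n+a)} e^{πiτ(n+a)²}`. -/
noncomputable def gUnary (a b : ℝ) (τ : ℂ) : ℂ :=
  ∑' n : ℤ, ((n : ℂ) + a) * Complex.exp (2 * (Real.pi : ℂ) * I * b * ((n : ℂ) + a)) *
    Complex.exp ((Real.pi : ℂ) * I * τ * ((n : ℂ) + a) ^ 2)

/-- Zwegers' nonholomorphic completion term
`R(u;τ) = ∑_{ν ∈ 1/2+ℤ} {sgn ν − 2∫₀^{(ν+α)√(2y)} e^{−πt²} dt} (−1)^{ν−1/2} e^{−πiν²τ−2πiνu}`,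
with `y = Im τ`, `α = Im u / Im τ`, indexed by `ν = n + 1/2`, `n ∈ ℤ`. -/
noncomputable def Rzw (u τ : ℂ) : ℂ :=
  ∑' n : ℤ,
    (((Real.sign ((n : ℝ) + 1/2) -
        2 * ∫ t in (0:ℝ)..(((n : ℝ) + 1/2 + u.im / τ.im) * Real.sqrt (2 * τ.im)),
          Real.exp (-Real.pi * t ^ 2)) : ℝ) : ℂ) *
      (-1 : ℂ) ^ n *
      Complex.exp (-(Real.pi : ℂ) * I * ((n : ℂ) + 1/2) ^ 2 * τ -
        2 * (Real.pi : ℂ) * I * ((n : ℂ) + 1/2) * u)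

/-!
On the vertical path `z = -τ̄ + it`, the term of frequency `m` of `g_{a,b}(z) / √(-i(z + τ))` is a
constant times `m e^{-πm²t} / √(2y + t)`, `y = Im τ`, which is the derivative of
`e^{2πym²} E(m √(2y + t))` for Zwegers' error function `E`. Integrating term by term therefore
produces the factors `sgn(m) - E(m √(2y))` of `R`, except that `R` has `sgn(ν)` in place of
`sgn(m) = sgn(ν + α)`. The two signs differ for finitely many `ν`; for `g_{1,b+1/2}` only at
`ν = -1/2`, `m = 0`, which accounts for the extra summand `i`.
-/

open MeasureTheory Filter Set
open scoped Real Topology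

theorem integrable_tsum_of_summable_integral_norm {α E ι : Type*} [MeasurableSpace α]
    {μ : Measure α} [NormedAddCommGroup E] [CompleteSpace E] [Countable ι] {F : ι → α → E}
    (hF_int : ∀ i, Integrable (F i) μ) (hF_sum : Summable fun i => ∫ x, ‖F i x‖ ∂μ) :
    Integrable (fun x => ∑' i, F i x) μ := by
  have hmeas (i : ι) : AEStronglyMeasurable (F i) μ := (hF_int i).aestronglyMeasurable
  have hfin : ∑' i, ∫⁻ x, ‖F i x‖ₑ ∂μ ≠ ⊤ := by
    simpa only [ofReal_integral_norm_eq_lintegral_enorm (hF_int _)] using hF_sum.tsum_ofReal_ne_top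
  have hsum : ∀ᵐ x ∂μ, Summable fun i => ‖F i x‖ :=
    summable_norm_of_tsum_eLpNorm_ne_top le_rfl hmeas <| by
      simpa only [eLpNorm_one_eq_lintegral_enorm] using hfin
  refine ⟨aestronglyMeasurable_of_tendsto_ae atTop
    (fun s => Finset.aestronglyMeasurable_fun_sum s fun i _ => hmeas i) ?_, ?_⟩
  · filter_upwards [hsum] with x hx using hx.of_norm.hasSum
  · calc ∫⁻ x, ‖∑' i, F i x‖ₑ ∂μ
        ≤ ∫⁻ x, ∑' i, ‖F i x‖ₑ ∂μ := lintegral_mono fun x => enorm_tsum_le_tsum_enorm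
      _ = ∑' i, ∫⁻ x, ‖F i x‖ₑ ∂μ := lintegral_tsum fun i => (hmeas i).enorm
      _ < ⊤ := hfin.lt_top

/-- Zwegers' error function `E`, restricted to real arguments; `R` is built from
`sgn(ν) - E((ν + α) √(2y))`. -/
noncomputable def zwegersE (x : ℝ) : ℝ :=
  2 * ∫ t in (0 : ℝ)..x, Real.exp (-π * t ^ 2)

@[simp]
theorem zwegersE_zero : zwegersE 0 = 0 := by simp [zwegersE]

theorem zwegersE_neg (x : ℝ) : zwegersE (-x) = -zwegersE x := by
  have h := intervalIntegral.integral_comp_neg (a := 0) (b := x)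
    fun t : ℝ => Real.exp (-π * t ^ 2)
  simp only [even_two, Even.neg_pow, neg_zero] at h
  rw [zwegersE, zwegersE, h, intervalIntegral.integral_symm, mul_neg]

theorem hasDerivAt_zwegersE (x : ℝ) : HasDerivAt zwegersE (2 * Real.exp (-π * x ^ 2)) x := by
  have hcont : Continuous fun t : ℝ => Real.exp (-π * t ^ 2) := by fun_prop
  exact (hcont.integral_hasStrictDerivAt 0 x).hasDerivAt.const_mul 2

theorem continuous_zwegersE : Continuous zwegersE :=
  continuous_iff_continuousAt.mpr fun x => (hasDerivAt_zwegersE x).continuousAt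

theorem tendsto_zwegersE_atTop : Tendsto zwegersE atTop (𝓝 1) := by
  have hgauss : ∫ t in Ioi (0 : ℝ), Real.exp (-π * t ^ 2) = 1 / 2 := by
    rw [integral_gaussian_Ioi, div_self Real.pi_ne_zero, Real.sqrt_one]
  have h := (intervalIntegral_tendsto_integral_Ioi 0
    (integrable_exp_neg_mul_sq Real.pi_pos).integrableOn tendsto_id).const_mul 2
  rwa [hgauss, mul_one_div_cancel two_ne_zero] at h

theorem tendsto_zwegersE_mul_atTop (m : ℝ) :
    Tendsto (fun x => zwegersE (m * x)) atTop (𝓝 (Real.sign m)) := by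
  have hpos {k : ℝ} (hk : 0 < k) : Tendsto (fun x => zwegersE (k * x)) atTop (𝓝 1) :=
    tendsto_zwegersE_atTop.comp (tendsto_id.const_mul_atTop hk)
  rcases lt_trichotomy m 0 with hm | rfl | hm
  · simpa only [Real.sign_of_neg hm, neg_mul, zwegersE_neg, neg_neg] using
      (hpos (neg_pos.mpr hm)).neg
  · simp
  · simpa only [Real.sign_of_pos hm] using hpos hm

/-- The function of `t` which, up to a constant factor, is the term of frequency `m` of
`g_{a,b}(z) / √(-i(z + τ))` at `z = -τ̄ + it`, where `c = 2 Im τ`. -/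
noncomputable def eichlerKernel (c m t : ℝ) : ℝ :=
  m * Real.exp (-π * m ^ 2 * t) / √(c + t)

/-- A primitive in `t` of `eichlerKernel c m`. -/
noncomputable def eichlerPrimitive (c m t : ℝ) : ℝ :=
  Real.exp (π * c * m ^ 2) * zwegersE (m * √(c + t))

theorem continuous_eichlerPrimitive (c m : ℝ) : Continuous (eichlerPrimitive c m) :=
  continuous_const.mul (continuous_zwegersE.comp (by fun_prop))

theorem hasDerivAt_eichlerPrimitive {c t : ℝ} (m : ℝ) (h : 0 < c + t) :
    HasDerivAt (eichlerPrimitive c m) (eichlerKernel c m t) t := by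
  have hinner : HasDerivAt (fun t => m * √(c + t)) (m * (1 / (2 * √(c + t)))) t :=
    (((hasDerivAt_id t).const_add c).sqrt h.ne').const_mul m
  refine (((hasDerivAt_zwegersE _).comp t hinner).const_mul _).congr_deriv ?_
  have hexp : Real.exp (-π * m ^ 2 * t) =
      Real.exp (π * c * m ^ 2) * Real.exp (-π * (m * √(c + t)) ^ 2) := by
    rw [← Real.exp_add, mul_pow, Real.sq_sqrt h.le]
    ring_nf
  rw [eichlerKernel, hexp]
  field_simp

theorem tendsto_eichlerPrimitive_atTop (c m : ℝ) :
    Tendsto (eichlerPrimitive c m) atTop (𝓝 (Real.exp (π * c * m ^ 2) * Real.sign m)) :=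
  ((tendsto_zwegersE_mul_atTop m).comp
    (Real.tendsto_sqrt_atTop.comp (tendsto_atTop_add_const_left _ c tendsto_id))).const_mul _

theorem integrableOn_eichlerKernel {c : ℝ} (hc : 0 ≤ c) (m : ℝ) :
    IntegrableOn (eichlerKernel c m) (Ioi 0) := by
  have hcont := (continuous_eichlerPrimitive c m).continuousWithinAt (s := Ici 0) (x := 0)
  have hderiv : ∀ t ∈ Ioi (0 : ℝ), HasDerivAt (eichlerPrimitive c m) (eichlerKernel c m t) t :=
    fun t ht => hasDerivAt_eichlerPrimitive m (add_pos_of_nonneg_of_pos hc ht)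
  have hlim := tendsto_eichlerPrimitive_atTop c m
  rcases le_total 0 m with hm | hm
  · refine integrableOn_Ioi_deriv_of_nonneg hcont hderiv (fun t _ => ?_) hlim
    unfold eichlerKernel
    positivity
  · refine integrableOn_Ioi_deriv_of_nonpos hcont hderiv (fun t _ => ?_) hlim
    exact div_nonpos_of_nonpos_of_nonneg
      (mul_nonpos_of_nonpos_of_nonneg hm (Real.exp_nonneg _)) (Real.sqrt_nonneg _)

theorem integral_eichlerKernel {c : ℝ} (hc : 0 ≤ c) (m : ℝ) :
    ∫ t in Ioi 0, eichlerKernel c m t =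
      Real.exp (π * c * m ^ 2) * (Real.sign m - zwegersE (m * √c)) := by
  rw [integral_Ioi_of_hasDerivAt_of_tendsto
    (continuous_eichlerPrimitive c m).continuousWithinAt
    (fun t ht => hasDerivAt_eichlerPrimitive m (add_pos_of_nonneg_of_pos hc ht))
    (integrableOn_eichlerKernel hc m) (tendsto_eichlerPrimitive_atTop c m),
    eichlerPrimitive, add_zero, mul_sub]

-- The kernel decreases in `c`, and for `c = 0` the integral formula gives exactly `sgn |m|`.
theorem integral_norm_eichlerKernel_le_one {c : ℝ} (hc : 0 ≤ c) (m : ℝ) :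
    ∫ t in Ioi 0, ‖eichlerKernel c m t‖ ≤ 1 := by
  have hle : ∀ t ∈ Ioi (0 : ℝ), ‖eichlerKernel c m t‖ ≤ eichlerKernel 0 |m| t := by
    intro t (ht : 0 < t)
    rw [eichlerKernel, eichlerKernel, norm_div, norm_mul, Real.norm_eq_abs m,
      Real.norm_of_nonneg (Real.exp_nonneg _), Real.norm_of_nonneg (Real.sqrt_nonneg _), sq_abs]
    gcongr
  calc ∫ t in Ioi 0, ‖eichlerKernel c m t‖
      ≤ ∫ t in Ioi 0, eichlerKernel 0 |m| t :=
        setIntegral_mono_on (integrableOn_eichlerKernel hc m).norm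
          (integrableOn_eichlerKernel le_rfl |m|) measurableSet_Ioi hle
    _ = Real.sign |m| := by simp [integral_eichlerKernel le_rfl]
    _ ≤ 1 := by rcases Real.sign_apply_eq |m| with h | h | h <;> rw [h] <;> norm_num

/-- The exponential `e(bm) e^{πizm²}` of real frequency `m`: the terms of `g_{a,b}(z)` are
`m * unaryExp b z m` for `m ∈ a + ℤ`. -/
noncomputable def unaryExp (b : ℝ) (z : ℂ) (m : ℝ) : ℂ :=
  Complex.exp (2 * π * I * b * m) * Complex.exp (π * I * z * m ^ 2)

theorem gUnary_eq_tsum_unaryExp (a b : ℝ) (z : ℂ) :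
    gUnary a b z = ∑' n : ℤ, ((n + a : ℝ) : ℂ) * unaryExp b z (n + a) := by
  simp only [gUnary, unaryExp, mul_assoc, ofReal_add, ofReal_intCast]

theorem unaryExp_add_I_mul (b : ℝ) (z : ℂ) (m s : ℝ) :
    unaryExp b (z + I * s) m = unaryExp b z m * (Real.exp (-π * m ^ 2 * s) : ℝ) := by
  simp only [unaryExp, ofReal_exp, ← Complex.exp_add]
  congr 1
  push_cast
  linear_combination (π * s * m ^ 2 : ℂ) * I_sq

theorem norm_unaryExp (b : ℝ) (z : ℂ) (m : ℝ) :
    ‖unaryExp b z m‖ = Real.exp (-π * m ^ 2 * z.im) := by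
  have hphase : 2 * π * I * b * m = ((2 * π * b * m : ℝ) : ℂ) * I := by push_cast; ring
  have hgauss : π * I * z * m ^ 2 = ((π * m ^ 2 : ℝ) : ℂ) * (I * z) := by push_cast; ring
  rw [unaryExp, norm_mul, hphase, norm_exp_ofReal_mul_I, one_mul, norm_exp, hgauss,
    re_ofReal_mul, I_mul_re]
  ring_nf

theorem summable_norm_unaryExp (a b : ℝ) {z : ℂ} (hz : 0 < z.im) :
    Summable fun n : ℤ => ‖unaryExp b z (n + a)‖ := by
  simpa only [norm_unaryExp] using (HurwitzZeta.hasSum_int_evenKernel a hz).summable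

theorem neg_conj_eq_neg_add_I_mul (τ : ℂ) : -(starRingEnd ℂ) τ = -τ + I * (2 * τ.im : ℝ) := by
  apply Complex.ext <;> simp [two_mul]

theorem neg_I_mul_path_cpow_half (τ : ℂ) {t : ℝ} (h : 0 ≤ 2 * τ.im + t) :
    (-I * (-(starRingEnd ℂ) τ + I * t + τ)) ^ ((1 : ℂ) / 2) = (√(2 * τ.im + t) : ℝ) := by
  have hbase : -I * (-(starRingEnd ℂ) τ + I * t + τ) = (2 * τ.im + t : ℝ) := by
    rw [neg_conj_eq_neg_add_I_mul]
    push_cast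
    linear_combination (-(2 * τ.im + t) : ℂ) * I_sq
  rw [hbase, Real.sqrt_eq_rpow, ofReal_cpow h]
  norm_num

/-- The term of index `n` of `g_{a,b}(z) / √(-i(z + τ))` at the point `z = -τ̄ + it`. -/
noncomputable def eichlerTerm (a b : ℝ) (τ : ℂ) (n : ℤ) (t : ℝ) : ℂ :=
  unaryExp b (-(starRingEnd ℂ) τ) (n + a) * eichlerKernel (2 * τ.im) (n + a) t

theorem gUnary_div_cpow_half_eq_tsum_eichlerTerm (a b : ℝ) (τ : ℂ) {t : ℝ}
    (h : 0 ≤ 2 * τ.im + t) :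
    gUnary a b (-(starRingEnd ℂ) τ + I * t) /
        (-I * (-(starRingEnd ℂ) τ + I * t + τ)) ^ ((1 : ℂ) / 2) =
      ∑' n : ℤ, eichlerTerm a b τ n t := by
  rw [neg_I_mul_path_cpow_half τ h, gUnary_eq_tsum_unaryExp, ← tsum_div_const]
  refine tsum_congr fun n => ?_
  rw [unaryExp_add_I_mul, eichlerTerm, eichlerKernel, ofReal_div, ofReal_mul]
  ring

/-- The term of index `n` of the integral of `g_{a,b}(z) / √(-i(z + τ))` along the path from `-τ̄`
to `i∞`, up to the factor `i`. -/
noncomputable def eichlerCoeff (a b : ℝ) (τ : ℂ) (n : ℤ) : ℂ :=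
  ((Real.sign (n + a) - zwegersE ((n + a) * √(2 * τ.im)) : ℝ) : ℂ) * unaryExp b (-τ) (n + a)

theorem integrableOn_eichlerTerm (a b : ℝ) {τ : ℂ} (hτ : 0 < τ.im) (n : ℤ) :
    IntegrableOn (eichlerTerm a b τ n) (Ioi 0) :=
  (integrableOn_eichlerKernel (by positivity) _).ofReal.const_mul _

theorem integral_eichlerTerm (a b : ℝ) {τ : ℂ} (hτ : 0 < τ.im) (n : ℤ) :
    ∫ t in Ioi 0, eichlerTerm a b τ n t = eichlerCoeff a b τ n := by
  have hcancel : ((Real.exp (-π * (n + a) ^ 2 * (2 * τ.im)) : ℝ) : ℂ) *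
      (Real.exp (π * (2 * τ.im) * (n + a) ^ 2) : ℝ) = 1 := by
    rw [← ofReal_mul, ← Real.exp_add, ← ofReal_one, ← Real.exp_zero]
    ring_nf
  simp only [eichlerTerm]
  rw [integral_const_mul, integral_complex_ofReal, integral_eichlerKernel (by positivity),
    neg_conj_eq_neg_add_I_mul, unaryExp_add_I_mul, eichlerCoeff, ofReal_mul]
  linear_combination (unaryExp b (-τ) (n + a) *
    (Real.sign (n + a) - zwegersE ((n + a) * √(2 * τ.im)) : ℝ)) * hcancel

theorem summable_integral_norm_eichlerTerm (a b : ℝ) {τ : ℂ} (hτ : 0 < τ.im) :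
    Summable fun n : ℤ => ∫ t in Ioi 0, ‖eichlerTerm a b τ n t‖ := by
  have hsum := summable_norm_unaryExp a b (z := -(starRingEnd ℂ) τ) (by simpa using hτ)
  refine hsum.of_nonneg_of_le (fun n => integral_nonneg fun t => norm_nonneg _) fun n => ?_
  simp only [eichlerTerm, norm_mul, norm_real]
  rw [integral_const_mul]
  exact mul_le_of_le_one_right (norm_nonneg _)
    (integral_norm_eichlerKernel_le_one (by positivity) _)

theorem eqOn_gUnary_div_cpow_half (a b : ℝ) {τ : ℂ} (hτ : 0 < τ.im) :
    EqOn (fun t : ℝ => gUnary a b (-(starRingEnd ℂ) τ + I * t) /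
        (-I * (-(starRingEnd ℂ) τ + I * t + τ)) ^ ((1 : ℂ) / 2))
      (fun t => ∑' n : ℤ, eichlerTerm a b τ n t) (Ioi 0) :=
  fun t ht => gUnary_div_cpow_half_eq_tsum_eichlerTerm a b τ
    (add_nonneg (by positivity) (mem_Ioi.mp ht).le)

theorem integrableOn_gUnary_div_cpow_half (a b : ℝ) {τ : ℂ} (hτ : 0 < τ.im) :
    IntegrableOn (fun t : ℝ => gUnary a b (-(starRingEnd ℂ) τ + I * t) /
      (-I * (-(starRingEnd ℂ) τ + I * t + τ)) ^ ((1 : ℂ) / 2)) (Ioi 0) :=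
  (integrableOn_congr_fun (eqOn_gUnary_div_cpow_half a b hτ) measurableSet_Ioi).mpr <|
    integrable_tsum_of_summable_integral_norm (integrableOn_eichlerTerm a b hτ)
      (summable_integral_norm_eichlerTerm a b hτ)

theorem hasSum_eichlerCoeff (a b : ℝ) {τ : ℂ} (hτ : 0 < τ.im) :
    HasSum (eichlerCoeff a b τ) (∫ t in Ioi (0 : ℝ), gUnary a b (-(starRingEnd ℂ) τ + I * t) /
      (-I * (-(starRingEnd ℂ) τ + I * t + τ)) ^ ((1 : ℂ) / 2)) := by
  rw [setIntegral_congr_fun measurableSet_Ioi (eqOn_gUnary_div_cpow_half a b hτ)]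
  simpa only [integral_eichlerTerm a b hτ] using hasSum_integral_of_summable_integral_norm
    (integrableOn_eichlerTerm a b hτ) (summable_integral_norm_eichlerTerm a b hτ)

/-- The term of index `n` of the discrepancy between `g_{a+1/2,b+1/2}`, whose integral produces
`sgn(ν + a)`, and `R(aτ - b; τ)`, which is built from `sgn(ν)`, at `ν = n + 1/2`. -/
noncomputable def signDefectTerm (a b : ℝ) (τ : ℂ) (n : ℤ) : ℂ :=
  ((Real.sign (n + (a + 1 / 2)) - Real.sign (n + 1 / 2) : ℝ) : ℂ) *
    unaryExp (b + 1 / 2) (-τ) (n + (a + 1 / 2))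

/-- The correction term in the formula for the integral of `g_{a+1/2,b+1/2}` in terms of
`R(aτ - b; τ)`. It is a finite sum, and empty for `|a| < 1/2`. -/
noncomputable def signDefect (a b : ℝ) (τ : ℂ) : ℂ :=
  ∑' n : ℤ, signDefectTerm a b τ n

theorem sign_add_eq_of_abs_lt {x y : ℝ} (h : |y| < |x|) : Real.sign (x + y) = Real.sign x := by
  rcases lt_or_ge x 0 with hx | hx
  · obtain ⟨-, hy⟩ := abs_lt.mp (abs_of_neg hx ▸ h)
    rw [Real.sign_of_neg hx, Real.sign_of_neg (by linarith)]
  · obtain ⟨hy, hy'⟩ := abs_lt.mp (abs_of_nonneg hx ▸ h)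
    rw [Real.sign_of_pos (by linarith), Real.sign_of_pos (by linarith)]

theorem summable_signDefectTerm (a b : ℝ) (τ : ℂ) : Summable (signDefectTerm a b τ) := by
  refine summable_of_hasFiniteSupport <|
    (finite_Icc ⌊-|a| - 1 / 2⌋ ⌈|a| - 1 / 2⌉).subset fun n hn => ?_
  have hle : |(n : ℝ) + 1 / 2| ≤ |a| := by
    by_contra! hlt
    have hsign := sign_add_eq_of_abs_lt hlt
    exact hn <| by
      rw [signDefectTerm, add_comm a, ← add_assoc, hsign, sub_self, ofReal_zero, zero_mul]
  have hbounds := abs_le.mp hle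
  have hlower : (⌊-|a| - 1 / 2⌋ : ℝ) ≤ n := (Int.floor_le _).trans (by linarith)
  have hupper : (n : ℝ) ≤ ⌈|a| - 1 / 2⌉ := le_trans (by linarith) (Int.le_ceil _)
  exact ⟨by exact_mod_cast hlower, by exact_mod_cast hupper⟩

theorem signDefect_half (b : ℝ) (τ : ℂ) : signDefect (1 / 2) b τ = 1 := by
  rw [signDefect, tsum_eq_single (-1)]
  · have hsign : Real.sign (-1 + 1 / 2) = -1 := Real.sign_of_neg (by norm_num)
    simp only [signDefectTerm, unaryExp, add_halves, Int.cast_neg, Int.cast_one, neg_add_cancel,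
      Real.sign_zero, hsign]
    simp
  · intro n hn
    have hn' : (1 : ℝ) ≤ |(n : ℝ) + 1| := by
      exact_mod_cast Int.one_le_abs (by lia : n + 1 ≠ 0)
    have hsign : Real.sign ((n : ℝ) + 1 + -(1 / 2)) = Real.sign (n + 1) :=
      sign_add_eq_of_abs_lt (by norm_num; linarith)
    have hshift : (n : ℝ) + 1 / 2 = n + 1 + -(1 / 2) := by ring
    rw [signDefectTerm, add_halves, hshift, hsign, sub_self, ofReal_zero, zero_mul]

theorem I_mul_exp_mul_exp_eq_unaryExp (a b : ℝ) (τ : ℂ) (n : ℤ) :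
    I * Complex.exp (2 * π * I * (-a ^ 2 * τ / 2 + a * (b + 1 / 2))) *
        ((-1) ^ n * Complex.exp (-π * I * (n + 1 / 2) ^ 2 * τ -
          2 * π * I * (n + 1 / 2) * (a * τ - b))) =
      unaryExp (b + 1 / 2) (-τ) (n + (a + 1 / 2)) := by
  have hsign : (-1 : ℂ) ^ n = Complex.exp (n * (π * I)) := by
    rw [Complex.exp_int_mul, exp_pi_mul_I]
  rw [hsign, unaryExp]
  nth_rw 1 [← exp_pi_div_two_mul_I]
  simp only [← Complex.exp_add]
  congr 1
  push_cast
  ring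

theorem I_mul_exp_mul_Rzw_eq_tsum {τ : ℂ} (hτ : τ.im ≠ 0) (a b : ℝ) :
    I * Complex.exp (2 * π * I * (-a ^ 2 * τ / 2 + a * (b + 1 / 2))) * Rzw (a * τ - b) τ =
      ∑' n : ℤ, (eichlerCoeff (a + 1 / 2) (b + 1 / 2) τ n - signDefectTerm a b τ n) := by
  rw [Rzw, ← tsum_mul_left]
  refine tsum_congr fun n => ?_
  have him : (a * τ - b : ℂ).im / τ.im = a := by simp [hτ]
  rw [him, mul_assoc _ ((-1) ^ n), mul_left_comm, I_mul_exp_mul_exp_eq_unaryExp, eichlerCoeff,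
    signDefectTerm, ← sub_mul, ← ofReal_sub, zwegersE]
  ring_nf

theorem eichler_g1_R_general {τ : ℂ} (hτ : 0 < τ.im) (a b : ℝ) :
    IntegrableOn (fun t : ℝ => gUnary (a + 1 / 2) (b + 1 / 2) (-(starRingEnd ℂ) τ + I * t) /
      (-I * (-(starRingEnd ℂ) τ + I * t + τ)) ^ ((1 : ℂ) / 2)) (Ioi 0) ∧
    I * ∫ t in Ioi (0 : ℝ), gUnary (a + 1 / 2) (b + 1 / 2) (-(starRingEnd ℂ) τ + I * t) /
        (-I * (-(starRingEnd ℂ) τ + I * t + τ)) ^ ((1 : ℂ) / 2) =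
      -Complex.exp (2 * π * I * (-a ^ 2 * τ / 2 + a * (b + 1 / 2))) * Rzw (a * τ - b) τ +
        I * signDefect a b τ := by
  refine ⟨integrableOn_gUnary_div_cpow_half _ _ hτ, ?_⟩
  have hcoeff := hasSum_eichlerCoeff (a + 1 / 2) (b + 1 / 2) hτ
  have hR := I_mul_exp_mul_Rzw_eq_tsum hτ.ne' a b
  rw [hcoeff.summable.tsum_sub (summable_signDefectTerm a b τ), hcoeff.tsum_eq,
    ← signDefect] at hR
  linear_combination -I * hR +
    Complex.exp (2 * π * I * (-a ^ 2 * τ / 2 + a * (b + 1 / 2))) * Rzw (a * τ - b) τ * I_sq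

theorem neg_exp_mul_Rzw_half (τ : ℂ) (b : ℝ) :
    -Complex.exp (2 * π * I * (-((1 / 2 : ℝ) : ℂ) ^ 2 * τ / 2 + (1 / 2 : ℝ) * (b + 1 / 2))) *
          Rzw ((1 / 2 : ℝ) * τ - b) τ =
      -I * Complex.exp (2 * π * I * (-τ / 8 + (b : ℂ) / 2)) * Rzw (τ / 2 - b) τ := by
  have harg : ((1 / 2 : ℝ) : ℂ) * τ - b = τ / 2 - b := by push_cast; ring
  have hexp : 2 * π * I * (-((1 / 2 : ℝ) : ℂ) ^ 2 * τ / 2 + (1 / 2 : ℝ) * (b + 1 / 2)) =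
      π / 2 * I + 2 * π * I * (-τ / 8 + (b : ℂ) / 2) := by push_cast; ring
  rw [harg, hexp, Complex.exp_add, exp_pi_div_two_mul_I, neg_mul I]

/-- Lemma 2.7(i): for `b ∈ ℝ` with `2b ∉ ℤ` and `τ ∈ ℍ`,
`∫_{-τ̄}^{i∞} g_{1,b+1/2}(z)/√(−i(z+τ)) dz = −i e(−τ/8 + b/2) R(τ/2 − b; τ) + i`. -/
theorem eichler_g1_R (τ : ℂ) (hτ : 0 < τ.im) (b : ℝ) (hb : ∀ m : ℤ, 2 * b ≠ (m : ℝ)) :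
    MeasureTheory.IntegrableOn
      (fun t : ℝ => gUnary 1 (b + 1/2) (-(starRingEnd ℂ) τ + I * t) /
        ((-I * (-(starRingEnd ℂ) τ + I * t + τ)) ^ ((1 : ℂ)/2))) (Set.Ioi 0) ∧
    I * ∫ t in Set.Ioi (0 : ℝ),
        gUnary 1 (b + 1/2) (-(starRingEnd ℂ) τ + I * t) /
          ((-I * (-(starRingEnd ℂ) τ + I * t + τ)) ^ ((1 : ℂ)/2)) =
      -I * Complex.exp (2 * (Real.pi : ℂ) * I * (-τ/8 + (b : ℂ)/2)) *
        Rzw (τ/2 - (b : ℂ)) τ + I := by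
  have h := eichler_g1_R_general hτ (1 / 2) b
  rwa [signDefect_half, neg_exp_mul_Rzw_half, add_halves, mul_one] at h
end

section
/- Let τ ∈ ℍ and let b ∈ (−1/2, 1/2) with b ≠ 0. Then the integral of g_{1, b+1/2}(z)/√(−i(z+τ)) along the vertical path from 0 to i∞ converges and equals −i·e(−τ/8 + b/2)·h(τ/2 − b; τ) + i. That is, i·∫₀^∞ g_{1,b+1/2}(it)/√(−i(it+τ)) dt = −i·e^{2πi(−τ/8 + b/2)}·h(τ/2 − b; τ) + i. -/
open Complex

/-- The Mordell integral `h(u;τ) = ∫_ℝ e^{πiτx² − 2πux}/cosh(πx) dx`. -/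
noncomputable def mordellH (u τ : ℂ) : ℂ :=
  ∫ x : ℝ, Complex.exp ((Real.pi : ℂ) * I * τ * (x : ℂ) ^ 2 - 2 * (Real.pi : ℂ) * u * x) /
    Complex.cosh ((Real.pi : ℂ) * x)

/-!
At `z = i t` the function `g_{1,β}` is `i` times the odd theta kernel `sinKernel β t`, whose dual
theta series is `∑ₙ levyDensity (n + β) t`. The Laplace transform of each term is an exponential by
the Cauchy–Schlömilch substitution, so the terms sum to a geometric series:
`∫₀^∞ sinKernel a t * exp (-π x² t) dt = sinh (π (1 - 2a) x) / sinh (π x)`. Writing the inverse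
square root as a Gaussian integral and exchanging the integrals, the period integral becomes
`∫ exp (π i τ x²) sinh (2π b x) / sinh (π x) dx` up to sign and a factor `i`.

The last integrand is the even part of `(exp (π i τ x² + 2π b x) - 1) / sinh (π x)`, which has no
pole at `0`, so its contour can be moved to `Im x = 1/2`, where `sinh (π x)` becomes `i cosh (π x)`
and the exponential part becomes the Mordell integral. The subtracted `1` contributes
`∫ dx / cosh (π x) = 1`, which is the extra `i` of the formula.
-/

open MeasureTheory Set Filter
open scoped Interval Real Topology

/-! ### The Cauchy–Schlömilch substitution -/

section CauchySchlomilch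

variable {E : Type*} [NormedAddCommGroup E] [NormedSpace ℝ E] {a b : ℝ}

lemma hasDerivAt_mul_sub_div (a b : ℝ) {s : ℝ} (hs : s ≠ 0) :
    HasDerivAt (fun s => a * s - b / s) (a + b / s ^ 2) s := by
  refine (((hasDerivAt_id s).const_mul a).sub
    ((hasDerivAt_const s b).div (hasDerivAt_id s) hs)).congr_deriv ?_
  simp only [id_eq]
  ring

lemma injOn_mul_sub_div_Ioi (ha : 0 < a) (hb : 0 ≤ b) :
    InjOn (fun s => a * s - b / s) (Ioi 0) := by
  refine StrictMonoOn.injOn fun s hs t _ hst => ?_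
  have : b / t ≤ b / s := div_le_div_of_nonneg_left hb hs hst.le
  have : a * s < a * t := by gcongr
  linarith

lemma image_mul_sub_div_Ioi (ha : 0 < a) (hb : 0 < b) :
    (fun s => a * s - b / s) '' Ioi 0 = univ := by
  refine eq_univ_of_forall fun y => ?_
  set r := √(y ^ 2 + 4 * a * b) with hr
  have hroot : |y| < r := by
    rw [hr, ← Real.sqrt_sq_eq_abs]
    exact Real.sqrt_lt_sqrt (sq_nonneg y) (by linarith [show 0 < 4 * a * b by positivity])
  have hnum : 0 < y + r := by linarith [neg_abs_le y]
  have hsq : r ^ 2 = y ^ 2 + 4 * a * b := Real.sq_sqrt (by positivity)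
  refine ⟨(y + r) / (2 * a), div_pos hnum (by positivity), ?_⟩
  have := hnum.ne'
  field_simp
  linear_combination hsq

lemma integrableOn_smul_comp_mul_sub_div_Ioi {f : ℝ → E} (hf : Integrable f)
    (ha : 0 < a) (hb : 0 < b) :
    IntegrableOn (fun s => (a + b / s ^ 2) • f (a * s - b / s)) (Ioi 0) := by
  have h := (integrableOn_image_iff_integrableOn_abs_deriv_smul measurableSet_Ioi
    (fun s hs => (hasDerivAt_mul_sub_div a b (ne_of_gt hs)).hasDerivWithinAt)
    (injOn_mul_sub_div_Ioi ha hb.le) f).1 hf.integrableOn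
  refine h.congr_fun (fun s _ => ?_) measurableSet_Ioi
  simp only [abs_of_pos (show 0 < a + b / s ^ 2 by positivity)]

lemma integral_smul_comp_mul_sub_div_Ioi (f : ℝ → E) (ha : 0 < a) (hb : 0 < b) :
    ∫ s in Ioi 0, (a + b / s ^ 2) • f (a * s - b / s) = ∫ y, f y := by
  have h := integral_image_eq_integral_abs_deriv_smul measurableSet_Ioi
    (fun s hs => (hasDerivAt_mul_sub_div a b (ne_of_gt hs)).hasDerivWithinAt)
    (injOn_mul_sub_div_Ioi ha hb.le) f
  rw [image_mul_sub_div_Ioi ha hb, setIntegral_univ] at h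
  rw [h]
  refine setIntegral_congr_fun measurableSet_Ioi fun s _ => ?_
  simp only [abs_of_pos (show 0 < a + b / s ^ 2 by positivity)]

theorem integrableOn_comp_mul_sub_div_Ioi {f : ℝ → E} (hf : Integrable f)
    (ha : 0 < a) (hb : 0 < b) :
    IntegrableOn (fun s => f (a * s - b / s)) (Ioi 0) := by
  have h := (integrableOn_smul_comp_mul_sub_div_Ioi hf ha hb).integrable.bdd_smul a⁻¹
    (φ := fun s => (a + b / s ^ 2)⁻¹) (Measurable.aestronglyMeasurable (by fun_prop))
    (Eventually.of_forall fun s => by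
      rw [Real.norm_of_nonneg (by positivity)]
      gcongr
      exact le_add_of_nonneg_right (by positivity))
  refine IntegrableOn.congr_fun h (fun s _ => ?_) measurableSet_Ioi
  exact inv_smul_smul₀ (by positivity) _

/-- The substitution `s ↦ (b / a) / s` negates `a * s - b / s` and exchanges the two terms of its
derivative. -/
lemma integral_div_sq_smul_comp_mul_sub_div_Ioi {f : ℝ → E} (heven : f.Even)
    (ha : 0 < a) (hb : 0 < b) :
    ∫ s in Ioi 0, (b / s ^ 2) • f (a * s - b / s) = a • ∫ s in Ioi 0, f (a * s - b / s) := by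
  have hinv := integral_comp_rpow_Ioi (fun t => f (a * (b / a * t) - b / (b / a * t)))
    (show (-1 : ℝ) ≠ 0 by simp)
  rw [integral_comp_mul_left_Ioi (fun t => f (a * t - b / t)) 0 (by positivity), mul_zero] at hinv
  calc ∫ s in Ioi 0, (b / s ^ 2) • f (a * s - b / s)
      = ∫ s in Ioi 0, b • ((|(-1)| * s ^ ((-1 : ℝ) - 1)) •
          f (a * (b / a * s ^ (-1 : ℝ)) - b / (b / a * s ^ (-1 : ℝ)))) := by
        refine setIntegral_congr_fun measurableSet_Ioi fun s (hs : 0 < s) => ?_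
        have hneg : a * (b / a * s⁻¹) - b / (b / a * s⁻¹) = -(a * s - b / s) := by
          field_simp
          ring
        have hpow : s ^ ((-1 : ℝ) - 1) = (s ^ 2)⁻¹ := by
          rw [← Real.rpow_two, ← Real.rpow_neg hs.le]
          norm_num
        rw [Real.rpow_neg_one, hneg, heven, hpow, abs_neg, abs_one, one_mul, smul_smul,
          div_eq_mul_inv]
    _ = a • ∫ s in Ioi 0, f (a * s - b / s) := by
        rw [integral_smul, hinv, smul_smul]
        congr 1
        field_simp

theorem integral_comp_mul_sub_div_Ioi {f : ℝ → E} (hf : Integrable f) (heven : f.Even)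
    (ha : 0 < a) (hb : 0 < b) :
    ∫ s in Ioi 0, f (a * s - b / s) = (2 * a)⁻¹ • ∫ y, f y := by
  have hleft : IntegrableOn (fun s => a • f (a * s - b / s)) (Ioi 0) :=
    (integrableOn_comp_mul_sub_div_Ioi hf ha hb).integrable.smul a
  have hright : IntegrableOn (fun s => (b / s ^ 2) • f (a * s - b / s)) (Ioi 0) := by
    refine ((integrableOn_smul_comp_mul_sub_div_Ioi hf ha hb).integrable.sub hleft).congr
      (Eventually.of_forall fun s => ?_)
    simp only [Pi.sub_apply, add_smul, add_sub_cancel_left]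
  rw [← integral_smul_comp_mul_sub_div_Ioi f ha hb]
  simp only [add_smul]
  rw [integral_add hleft hright, integral_div_sq_smul_comp_mul_sub_div_Ioi heven ha hb,
    integral_smul, ← two_smul ℝ, smul_smul, smul_smul, mul_assoc,
    inv_mul_cancel₀ (by positivity), one_smul]

end CauchySchlomilch

/-! ### Laplace transform of the odd theta kernel -/

/-- For `c > 0`, the density at `t > 0` of the Lévy distribution with scale parameter `2πc²`;
extended to be odd in `c`, so that the odd theta kernel is a sum of its values over a translate of
`ℤ`. -/
noncomputable def levyDensity (c t : ℝ) : ℝ :=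
  c / t ^ (3 / 2 : ℝ) * Real.exp (-π * c ^ 2 / t)

lemma levyDensity_eq_sign_mul_levyDensity_abs (c t : ℝ) :
    levyDensity c t = SignType.sign c * levyDensity |c| t := by
  rw [levyDensity, levyDensity, sq_abs, ← mul_assoc, ← mul_div_assoc, sign_mul_abs]

lemma norm_levyDensity (c : ℝ) {t : ℝ} (ht : 0 < t) : ‖levyDensity c t‖ = levyDensity |c| t := by
  rw [levyDensity, levyDensity, norm_mul, norm_div, Real.norm_eq_abs c,
    Real.norm_of_nonneg (by positivity), Real.norm_of_nonneg (by positivity), sq_abs]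

lemma smul_levyDensity_mul_exp_comp_rpow (c x : ℝ) {s : ℝ} (hs : 0 < s) :
    (|(-2)| * s ^ ((-2 : ℝ) - 1)) •
        (levyDensity c (s ^ (-2 : ℝ)) * Real.exp (-π * x ^ 2 * s ^ (-2 : ℝ))) =
      2 * c * Real.exp (-2 * π * c * x) * Real.exp (-π * (c * s - x / s) ^ 2) := by
  have hcube : s ^ ((-2 : ℝ) - 1) = (s ^ 3)⁻¹ := by
    rw [← Real.rpow_natCast, ← Real.rpow_neg hs.le]
    norm_num
  have hdenom : ((s ^ 2)⁻¹) ^ (3 / 2 : ℝ) = (s ^ 3)⁻¹ := by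
    rw [Real.inv_rpow (by positivity), ← Real.rpow_natCast, ← Real.rpow_natCast,
      ← Real.rpow_mul hs.le]
    norm_num
  have hexp : -π * c ^ 2 / (s ^ 2)⁻¹ + -π * x ^ 2 * (s ^ 2)⁻¹ =
      -2 * π * c * x + -π * (c * s - x / s) ^ 2 := by
    field_simp
    ring
  rw [levyDensity, Real.rpow_neg hs.le, Real.rpow_two, hdenom, hcube, mul_assoc (c / _),
    ← Real.exp_add, hexp, Real.exp_add, smul_eq_mul, abs_neg, abs_two]
  field_simp

lemma integrableOn_levyDensity_mul_exp (c : ℝ) {x : ℝ} (hx : 0 < x) :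
    IntegrableOn (fun t => levyDensity c t * Real.exp (-π * x ^ 2 * t)) (Ioi 0) := by
  wlog hc : 0 < c generalizing c
  · rcases eq_or_ne c 0 with rfl | hc₀
    · simp only [levyDensity, zero_div, zero_mul, integrableOn_zero]
    · simp only [levyDensity_eq_sign_mul_levyDensity_abs c, mul_assoc (SignType.sign c : ℝ)]
      exact (this |c| (abs_pos.2 hc₀)).integrable.const_mul _
  rw [← integrableOn_Ioi_comp_rpow_iff _ (show (-2 : ℝ) ≠ 0 by simp)]
  refine IntegrableOn.congr_fun (f := fun s => 2 * c * Real.exp (-2 * π * c * x) *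
    Real.exp (-π * (c * s - x / s) ^ 2)) ?_
    (fun s hs => (smul_levyDensity_mul_exp_comp_rpow c x hs).symm) measurableSet_Ioi
  exact (integrableOn_comp_mul_sub_div_Ioi (integrable_exp_neg_mul_sq Real.pi_pos)
    hc hx).integrable.const_mul _

theorem integral_levyDensity_mul_exp (c : ℝ) {x : ℝ} (hx : 0 < x) :
    ∫ t in Ioi 0, levyDensity c t * Real.exp (-π * x ^ 2 * t) =
      SignType.sign c * Real.exp (-2 * π * |c| * x) := by
  wlog hc : 0 < c generalizing c
  · rcases eq_or_ne c 0 with rfl | hc₀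
    · simp only [levyDensity, zero_div, zero_mul, integral_zero, sign_zero, SignType.coe_zero]
    · simp only [levyDensity_eq_sign_mul_levyDensity_abs c, mul_assoc (SignType.sign c : ℝ)]
      rw [integral_const_mul, this |c| (abs_pos.2 hc₀), sign_pos (abs_pos.2 hc₀),
        SignType.coe_one, one_mul, abs_abs]
  have hgauss : ∫ y : ℝ, Real.exp (-π * y ^ 2) = 1 := by
    rw [integral_gaussian, div_self Real.pi_ne_zero, Real.sqrt_one]
  rw [← integral_comp_rpow_Ioi _ (show (-2 : ℝ) ≠ 0 by simp),
    setIntegral_congr_fun measurableSet_Ioi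
      fun s hs => smul_levyDensity_mul_exp_comp_rpow c x hs,
    integral_const_mul, integral_comp_mul_sub_div_Ioi (f := fun y => Real.exp (-π * y ^ 2))
      (integrable_exp_neg_mul_sq Real.pi_pos) (fun y => by simp only [neg_sq]) hc hx,
    hgauss, sign_pos hc, SignType.coe_one, one_mul, abs_of_pos hc, smul_eq_mul]
  field_simp

lemma integral_norm_levyDensity_mul_exp (c : ℝ) {x : ℝ} (hx : 0 < x) :
    ∫ t in Ioi 0, ‖levyDensity c t * Real.exp (-π * x ^ 2 * t)‖ =
      ‖SignType.sign c * Real.exp (-2 * π * |c| * x)‖ := by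
  have hsign : ((SignType.sign |c| : SignType) : ℝ) = |((SignType.sign c : SignType) : ℝ)| := by
    rcases eq_or_ne c 0 with rfl | hc
    · simp
    · rcases hc.lt_or_gt with hneg | hpos <;> simp [*]
  calc ∫ t in Ioi 0, ‖levyDensity c t * Real.exp (-π * x ^ 2 * t)‖
      = ∫ t in Ioi 0, levyDensity |c| t * Real.exp (-π * x ^ 2 * t) := by
        refine setIntegral_congr_fun measurableSet_Ioi fun t ht => ?_
        simp only [norm_mul, norm_levyDensity c ht, Real.norm_of_nonneg (Real.exp_pos _).le]
    _ = ‖SignType.sign c * Real.exp (-2 * π * |c| * x)‖ := by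
        rw [integral_levyDensity_mul_exp _ hx, abs_abs, hsign, norm_mul, Real.norm_eq_abs,
          Real.norm_of_nonneg (Real.exp_pos _).le]

lemma hasSum_levyDensity_sinKernel (a : ℝ) {t : ℝ} (ht : 0 < t) :
    HasSum (fun n : ℤ => levyDensity (n + a) t) (HurwitzZeta.sinKernel a t) := by
  have h := (HurwitzZeta.hasSum_int_oddKernel a (one_div_pos.2 ht)).mul_left
    ((1 / t) ^ (3 / 2 : ℝ))
  rw [HurwitzZeta.oddKernel_functional_equation, one_div_one_div,
    ← mul_assoc, mul_one_div_cancel (by positivity), one_mul] at h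
  refine h.congr_fun fun n => ?_
  rw [levyDensity, one_div, Real.inv_rpow ht.le]
  ring_nf

lemma hasSum_exp_neg_two_pi_mul_add (c : ℝ) {x : ℝ} (hx : 0 < x) :
    HasSum (fun n : ℕ => Real.exp (-2 * π * (n + c) * x))
      (Real.exp (π * (1 - 2 * c) * x) / (2 * Real.sinh (π * x))) := by
  have hπx : 0 < π * x := mul_pos Real.pi_pos hx
  have hratio : Real.exp (-2 * π * x) < 1 := by
    rw [Real.exp_lt_one_iff]
    linarith
  have hsinh : 2 * Real.sinh (π * x) = Real.exp (π * x) * (1 - Real.exp (-2 * π * x)) := by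
    rw [Real.sinh_eq, mul_div_cancel₀ _ two_ne_zero, mul_sub, mul_one, ← Real.exp_add]
    ring_nf
  have hvalue : Real.exp (π * (1 - 2 * c) * x) / (2 * Real.sinh (π * x)) =
      Real.exp (-2 * π * c * x) * (1 - Real.exp (-2 * π * x))⁻¹ := by
    rw [hsinh, ← div_div, ← Real.exp_sub, div_eq_mul_inv]
    ring_nf
  rw [hvalue]
  refine ((hasSum_geometric_of_lt_one (Real.exp_pos _).le hratio).mul_left _).congr_fun fun n => ?_
  rw [← Real.exp_nat_mul, ← Real.exp_add]
  ring_nf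

lemma hasSum_sign_mul_exp {a x : ℝ} (ha₀ : 0 < a) (ha₁ : a < 1) (hx : 0 < x) :
    HasSum (fun n : ℤ => SignType.sign (n + a) * Real.exp (-2 * π * |n + a| * x))
      (Real.sinh (π * (1 - 2 * a) * x) / Real.sinh (π * x)) := by
  have hvalue : Real.sinh (π * (1 - 2 * a) * x) / Real.sinh (π * x) =
      Real.exp (π * (1 - 2 * a) * x) / (2 * Real.sinh (π * x)) +
        -(Real.exp (π * (1 - 2 * (1 - a)) * x) / (2 * Real.sinh (π * x))) := by
    rw [Real.sinh_eq (π * (1 - 2 * a) * x)]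
    ring_nf
  rw [hvalue]
  refine HasSum.of_nat_of_neg_add_one
    ((hasSum_exp_neg_two_pi_mul_add a hx).congr_fun fun n => ?_)
    ((hasSum_exp_neg_two_pi_mul_add (1 - a) hx).neg.congr_fun fun n => ?_)
  · have hpos : (0 : ℝ) < n + a := by positivity
    rw [Int.cast_natCast, sign_pos hpos, abs_of_pos hpos, SignType.coe_one, one_mul]
  · have hcast : ((-((n : ℤ) + 1) : ℤ) : ℝ) + a = -(n + (1 - a)) := by
      push_cast
      ring
    have hpos : (0 : ℝ) < n + (1 - a) := add_pos_of_nonneg_of_pos n.cast_nonneg (by linarith)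
    rw [hcast, Left.sign_neg, sign_pos hpos, abs_neg, abs_of_pos hpos, SignType.coe_neg_one,
      neg_one_mul]

lemma integral_sinKernel_mul_exp_of_pos {a x : ℝ} (ha₀ : 0 < a) (ha₁ : a < 1) (hx : 0 < x) :
    ∫ t in Ioi 0, HurwitzZeta.sinKernel a t * Real.exp (-π * x ^ 2 * t) =
      Real.sinh (π * (1 - 2 * a) * x) / Real.sinh (π * x) := by
  have hsum := hasSum_sign_mul_exp ha₀ ha₁ hx
  have hterms := hasSum_integral_of_summable_integral_norm
    (fun n : ℤ => integrableOn_levyDensity_mul_exp (n + a) hx)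
    (by simpa only [integral_norm_levyDensity_mul_exp _ hx] using hsum.summable.norm)
  simp only [integral_levyDensity_mul_exp _ hx] at hterms
  rw [← hterms.unique hsum]
  refine setIntegral_congr_fun measurableSet_Ioi fun t ht => ?_
  exact ((hasSum_levyDensity_sinKernel a ht).mul_right _).tsum_eq.symm

theorem integral_sinKernel_mul_exp {a x : ℝ} (ha₀ : 0 < a) (ha₁ : a < 1) (hx : x ≠ 0) :
    ∫ t in Ioi 0, HurwitzZeta.sinKernel a t * Real.exp (-π * x ^ 2 * t) =
      Real.sinh (π * (1 - 2 * a) * x) / Real.sinh (π * x) := by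
  rcases hx.lt_or_gt with hneg | hpos
  · have h := integral_sinKernel_mul_exp_of_pos ha₀ ha₁ (neg_pos.2 hneg)
    simpa only [neg_sq, mul_neg, Real.sinh_neg, neg_div_neg_eq] using h
  · exact integral_sinKernel_mul_exp_of_pos ha₀ ha₁ hpos

lemma integrableOn_sinKernel (a : UnitAddCircle) :
    IntegrableOn (HurwitzZeta.sinKernel a) (Ioi 0) := by
  have h := ((HurwitzZeta.isStrong_hurwitzOddFEPair a).symm.hasMellin 1).1
  simp only [MellinConvergent, HurwitzZeta.hurwitzOddFEPair, WeakFEPair.symm, sub_self, cpow_zero,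
    one_smul, Function.comp_def] at h
  exact h.re

/-! ### The theta side -/

lemma gUnary_one_I_mul (β : ℝ) {t : ℝ} (ht : 0 < t) :
    gUnary 1 β (I * t) = I * HurwitzZeta.sinKernel β t := by
  have h := (HurwitzZeta.hasSum_int_sinKernel β ht).mul_left I
  rw [← (Equiv.addRight (1 : ℤ)).hasSum_iff] at h
  rw [← h.tsum_eq, gUnary]
  refine tsum_congr fun n => ?_
  simp only [Function.comp_apply, Equiv.coe_addRight]
  push_cast
  rw [show (π : ℂ) * I * (I * t) * (n + 1) ^ 2 = -π * (n + 1) ^ 2 * t by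
    linear_combination (π * t * (n + 1) ^ 2 : ℂ) * I_mul_I]
  linear_combination ((n + 1) * cexp (2 * π * I * β * (n + 1)) *
    cexp (-π * (n + 1) ^ 2 * t)) * I_sq

lemma integral_cexp_neg_pi_mul_sq {z : ℂ} (hz : 0 < z.re) :
    ∫ x : ℝ, cexp (-π * z * x ^ 2) = 1 / z ^ (1 / 2 : ℂ) := by
  have hre : 0 < ((π : ℂ) * z).re := by
    rw [re_ofReal_mul]
    positivity
  have harg : z.arg ≠ π := fun h => (arg_eq_pi_iff.1 h).1.not_gt hz
  have hπ : (π : ℂ) ≠ 0 := by exact_mod_cast Real.pi_ne_zero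
  simp only [neg_mul (π : ℂ) z]
  rw [integral_gaussian_complex hre, div_mul_cancel_left₀ hπ, inv_cpow _ _ harg, one_div, one_div]

section LaplaceKernel

variable {K : ℝ → ℂ} {z : ℂ}

lemma integrable_mul_cexp_neg_pi_mul_sq (hK : IntegrableOn K (Ioi 0)) (hz : 0 < z.re) :
    Integrable (fun p : ℝ × ℝ => K p.1 * cexp (-π * (p.1 + z) * p.2 ^ 2))
      ((volume.restrict (Ioi 0)).prod volume) := by
  have hgauss : Integrable fun x : ℝ => cexp (-π * z * x ^ 2) := by
    simp only [neg_mul (π : ℂ) z]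
    refine integrable_cexp_neg_mul_sq ?_
    rw [re_ofReal_mul]
    positivity
  have hprod := hK.integrable.mul_prod hgauss
  have hbdd : ∀ᵐ p : ℝ × ℝ ∂(volume.restrict (Ioi 0)).prod volume,
      ‖cexp (-π * p.1 * p.2 ^ 2)‖ ≤ 1 := by
    filter_upwards [Measure.quasiMeasurePreserving_fst.ae (ae_restrict_mem measurableSet_Ioi)]
      with p (hp : 0 < p.1)
    rw [Complex.norm_exp, Real.exp_le_one_iff]
    norm_cast
    simp only [neg_mul, Left.neg_nonpos_iff]
    positivity
  refine (hprod.mul_bdd (by fun_prop) hbdd).congr (Eventually.of_forall fun p => ?_)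
  simp only
  rw [mul_assoc, ← Complex.exp_add]
  ring_nf

lemma div_cpow_half_eq_integral (K : ℝ → ℂ) (hz : 0 < z.re) {t : ℝ} (ht : 0 < t) :
    K t / (t + z) ^ (1 / 2 : ℂ) = ∫ x : ℝ, K t * cexp (-π * (t + z) * x ^ 2) := by
  have hre : 0 < ((t : ℂ) + z).re := by
    rw [add_re, ofReal_re]
    positivity
  rw [integral_const_mul, integral_cexp_neg_pi_mul_sq hre, mul_one_div]

lemma integrableOn_div_cpow_half (hK : IntegrableOn K (Ioi 0)) (hz : 0 < z.re) :
    IntegrableOn (fun t : ℝ => K t / (t + z) ^ (1 / 2 : ℂ)) (Ioi 0) :=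
  IntegrableOn.congr_fun (integrable_mul_cexp_neg_pi_mul_sq hK hz).integral_prod_left
    (fun _ ht => (div_cpow_half_eq_integral K hz ht).symm) measurableSet_Ioi

theorem integral_div_cpow_half (hK : IntegrableOn K (Ioi 0)) (hz : 0 < z.re) :
    ∫ t in Ioi (0 : ℝ), K t / (t + z) ^ (1 / 2 : ℂ) =
      ∫ x : ℝ, cexp (-π * z * x ^ 2) * ∫ t in Ioi (0 : ℝ), K t * cexp (-π * x ^ 2 * t) := by
  rw [setIntegral_congr_fun measurableSet_Ioi fun t ht => div_cpow_half_eq_integral K hz ht,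
    integral_integral_swap (integrable_mul_cexp_neg_pi_mul_sq hK hz)]
  congr 1 with x
  rw [← integral_const_mul]
  congr 1 with t
  rw [mul_left_comm, ← Complex.exp_add]
  ring_nf

end LaplaceKernel

lemma integral_ofReal_sinKernel_mul_cexp {a x : ℝ} (ha₀ : 0 < a) (ha₁ : a < 1) (hx : x ≠ 0) :
    ∫ t in Ioi (0 : ℝ), (HurwitzZeta.sinKernel a t : ℂ) * cexp (-π * x ^ 2 * t) =
      Complex.sinh (π * (1 - 2 * a) * x) / Complex.sinh (π * x) := by
  have h := congrArg ((↑) : ℝ → ℂ) (integral_sinKernel_mul_exp ha₀ ha₁ hx)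
  rw [← integral_complex_ofReal] at h
  push_cast at h
  exact h

theorem integral_sinKernel_div_cpow_half {a : ℝ} (ha₀ : 0 < a) (ha₁ : a < 1) {z : ℂ}
    (hz : 0 < z.re) :
    ∫ t in Ioi (0 : ℝ), (HurwitzZeta.sinKernel a t : ℂ) / (t + z) ^ (1 / 2 : ℂ) =
      ∫ x : ℝ, cexp (-π * z * x ^ 2) *
        (Complex.sinh (π * (1 - 2 * a) * x) / Complex.sinh (π * x)) := by
  rw [integral_div_cpow_half (K := fun t => (HurwitzZeta.sinKernel a t : ℂ))
    (integrableOn_sinKernel a).ofReal hz]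
  refine integral_congr_ae ?_
  filter_upwards [volume.ae_ne (0 : ℝ)] with x hx
  rw [integral_ofReal_sinKernel_mul_cexp ha₀ ha₁ hx]

/-! ### Hyperbolic functions -/

lemma abs_le_cosh (x : ℝ) : |x| ≤ Real.cosh x := by
  rw [← Real.cosh_abs]
  exact (Real.self_le_sinh_iff.2 (abs_nonneg x)).trans (Real.sinh_lt_cosh _).le

lemma one_add_sq_div_two_le_cosh (x : ℝ) : 1 + x ^ 2 / 2 ≤ Real.cosh x := by
  have hhalf : |x / 2| ≤ |Real.sinh (x / 2)| := by
    rw [Real.abs_sinh]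
    exact Real.self_le_sinh_iff.2 (abs_nonneg _)
  have hdouble : Real.cosh x = 2 * Real.sinh (x / 2) ^ 2 + 1 := by
    rw [show x = 2 * (x / 2) by ring, Real.cosh_two_mul, Real.cosh_sq]
    ring_nf
  linarith [sq_le_sq.2 hhalf]

lemma cosh_le_two_mul_abs_sinh {x : ℝ} (hx : 1 ≤ |x|) : Real.cosh x ≤ 2 * |Real.sinh x| := by
  have hsinh : 1 ≤ |Real.sinh x| := by
    rw [Real.abs_sinh]
    exact hx.trans (Real.self_le_sinh_iff.2 (abs_nonneg x))
  refine le_of_sq_le_sq ?_ (by positivity)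
  rw [mul_pow, sq_abs, Real.cosh_sq, ← sq_abs]
  nlinarith

lemma abs_sinh_re_le_norm_sinh (w : ℂ) : |Real.sinh w.re| ≤ ‖Complex.sinh w‖ := by
  have h := abs_norm_sub_norm_le (cexp w) (cexp (-w))
  rw [Complex.norm_exp, Complex.norm_exp, neg_re] at h
  rw [Complex.sinh, norm_div, Real.sinh_eq, abs_div, Complex.norm_ofNat, abs_two]
  gcongr

lemma sinh_pi_mul_add_half_I (z : ℂ) :
    Complex.sinh (π * (z + (1 / 2 : ℝ) * I)) = I * Complex.cosh (π * z) := by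
  rw [mul_add, show (π : ℂ) * ((1 / 2 : ℝ) * I) = (π / 2 : ℂ) * I by push_cast; ring,
    Complex.sinh_add, Complex.cosh_mul_I, Complex.sinh_mul_I, Complex.cos_pi_div_two,
    Complex.sin_pi_div_two, mul_zero, zero_add, one_mul, mul_comm]

lemma sinh_pi_mul_ne_zero {w : ℂ} (him : |w.im| < 1) (hw : w ≠ 0) :
    Complex.sinh (π * w) ≠ 0 := by
  intro h
  have hsin : Complex.sin (π * w * I) = 0 := by rw [Complex.sin_mul_I, h, zero_mul]
  obtain ⟨k, hk⟩ := Complex.sin_eq_zero_iff.1 hsin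
  have hwI : w * I = k := by
    refine mul_left_cancel₀ (ofReal_ne_zero.2 Real.pi_ne_zero) ?_
    linear_combination hk
  have hk₀ : k = 0 := by
    have him' : w.im = -k := neg_eq_iff_eq_neg.1 (by simpa using congrArg re hwI)
    rw [him', abs_neg] at him
    exact Int.abs_lt_one_iff.1 (by exact_mod_cast him)
  rw [hk₀, Int.cast_zero, mul_eq_zero, or_iff_left I_ne_zero] at hwI
  exact hw hwI

lemma tendsto_inv_cosh_cocompact : Tendsto (fun x => (Real.cosh x)⁻¹) (cocompact ℝ) (𝓝 0) :=
  (tendsto_atTop_mono abs_le_cosh (tendsto_norm_cocompact_atTop (E := ℝ))).inv_tendsto_atTop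

lemma integrable_inv_cosh : Integrable fun x : ℝ => (Real.cosh x)⁻¹ := by
  refine (integrable_inv_one_add_sq.const_mul 2).mono'
    (Real.continuous_cosh.inv₀ fun x => (Real.cosh_pos x).ne').aestronglyMeasurable
    (Eventually.of_forall fun x => ?_)
  rw [Real.norm_of_nonneg (inv_pos.2 (Real.cosh_pos x)).le, ← div_eq_mul_inv,
    ← one_div, div_le_div_iff₀ (Real.cosh_pos x) (by positivity)]
  linarith [one_add_sq_div_two_le_cosh x]

lemma tendsto_sinh_atTop : Tendsto Real.sinh atTop atTop :=
  tendsto_atTop_mono' _ ((eventually_ge_atTop 0).mono fun _ => Real.self_le_sinh_iff.2) tendsto_id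

lemma tendsto_sinh_atBot : Tendsto Real.sinh atBot atBot :=
  tendsto_atBot_mono' _ ((eventually_le_atBot 0).mono fun _ => Real.sinh_le_self_iff.2) tendsto_id

theorem integral_inv_cosh : ∫ x : ℝ, (Real.cosh x)⁻¹ = π := by
  have hderiv (x : ℝ) : HasDerivAt (fun x => Real.arctan (Real.sinh x)) (Real.cosh x)⁻¹ x := by
    refine (Real.hasDerivAt_sinh x).arctan.congr_deriv ?_
    rw [add_comm, ← Real.cosh_sq]
    field [(Real.cosh_pos x).ne']
  have hbot := (tendsto_nhds_of_tendsto_nhdsWithin Real.tendsto_arctan_atBot).comp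
    tendsto_sinh_atBot
  have htop := (tendsto_nhds_of_tendsto_nhdsWithin Real.tendsto_arctan_atTop).comp
    tendsto_sinh_atTop
  rw [integral_of_hasDerivAt_of_tendsto hderiv integrable_inv_cosh hbot htop]
  ring

/-! ### Shifting a horizontal contour -/

section HorizontalLine

variable {E : Type*} [NormedAddCommGroup E] {f : ℂ → E} {g : ℝ → ℝ} {a b : ℝ}

lemma integrable_comp_add_mul_I (hf : ContinuousOn f (im ⁻¹' [[a, b]]))
    (hbound : ∀ᶠ x : ℝ in cocompact ℝ, ∀ y ∈ [[a, b]], ‖f (x + y * I)‖ ≤ g x) (hg : Integrable g)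
    {y : ℝ} (hy : y ∈ [[a, b]]) : Integrable fun x : ℝ => f (x + y * I) := by
  have hcont : Continuous fun x : ℝ => f (x + y * I) :=
    hf.comp_continuous (by fun_prop) fun x => by simpa using hy
  exact hcont.locallyIntegrable.integrable_of_isBigO_cocompact
    (Asymptotics.IsBigO.of_norm_eventuallyLE (hbound.mono fun x hx => hx y hy))
    (hg.integrableAtFilter _)

variable [NormedSpace ℂ E]

lemma tendsto_intervalIntegral_comp_add_mul_I
    (hbound : ∀ᶠ x : ℝ in cocompact ℝ, ∀ y ∈ [[a, b]], ‖f (x + y * I)‖ ≤ g x)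
    (hg : Tendsto g (cocompact ℝ) (𝓝 0)) :
    Tendsto (fun x : ℝ => ∫ y in a..b, f (x + y * I)) (cocompact ℝ) (𝓝 0) := by
  refine squeeze_zero_norm' (a := fun x => g x * |b - a|) ?_ (by simpa using hg.mul_const |b - a|)
  filter_upwards [hbound] with x hx
  exact intervalIntegral.norm_integral_le_of_norm_le_const
    fun y hy => hx y (uIoc_subset_uIcc hy)

theorem integral_comp_add_mul_I_eq (hf : DifferentiableOn ℂ f (im ⁻¹' [[a, b]]))
    (hbound : ∀ᶠ x : ℝ in cocompact ℝ, ∀ y ∈ [[a, b]], ‖f (x + y * I)‖ ≤ g x) (hg : Integrable g)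
    (hg₀ : Tendsto g (cocompact ℝ) (𝓝 0)) :
    ∫ x : ℝ, f (x + a * I) = ∫ x : ℝ, f (x + b * I) := by
  have hrect (R : ℝ) := integral_boundary_rect_eq_zero_of_differentiableOn f ⟨-R, a⟩ ⟨R, b⟩
    (hf.mono fun w hw => hw.2)
  have hhor {y : ℝ} (hy : y ∈ [[a, b]]) := intervalIntegral_tendsto_integral
    (integrable_comp_add_mul_I hf.continuousOn hbound hg hy) tendsto_neg_atTop_atBot tendsto_id
  have hvert {s : ℝ → ℝ} (hs : Tendsto s atTop (cocompact ℝ)) :=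
    ((tendsto_intervalIntegral_comp_add_mul_I hbound hg₀).comp hs).const_smul I
  have hlim := (((hhor left_mem_uIcc).sub (hhor right_mem_uIcc)).add
    (hvert (tendsto_id.mono_right atTop_le_cocompact))).sub
    (hvert (tendsto_neg_atTop_atBot.mono_right atBot_le_cocompact))
  simp only [smul_zero, add_zero, sub_zero] at hlim
  exact sub_eq_zero.1 (tendsto_nhds_unique_of_eventuallyEq hlim tendsto_const_nhds
    (Eventually.of_forall hrect))

end HorizontalLine

/-! ### The Mordell integral -/

section DslopeQuotient

variable {f g : ℂ → ℂ} {c : ℂ}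

lemma dslope_div_dslope_of_ne (f g : ℂ → ℂ) {w : ℂ} (hw : w ≠ c) :
    dslope f c w / dslope g c w = (f w - f c) / (g w - g c) := by
  rw [dslope_of_ne _ hw, dslope_of_ne _ hw, slope_def_field, slope_def_field,
    div_div_div_cancel_right₀ (sub_ne_zero.2 hw)]

lemma differentiableOn_dslope_div_dslope {U : Set ℂ} (hU : U ∈ 𝓝 c) (hf : DifferentiableOn ℂ f U)
    (hg : DifferentiableOn ℂ g U) (hg' : deriv g c ≠ 0) (hne : ∀ w ∈ U, w ≠ c → g w ≠ g c) :
    DifferentiableOn ℂ (fun w => dslope f c w / dslope g c w) U := by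
  refine ((differentiableOn_dslope hU).2 hf).fun_div ((differentiableOn_dslope hU).2 hg)
    fun w hw => ?_
  rcases eq_or_ne w c with rfl | hwc
  · rwa [dslope_same]
  · rw [dslope_of_ne _ hwc, slope_def_field]
    exact div_ne_zero (sub_ne_zero.2 (hne w hw hwc)) (sub_ne_zero.2 hwc)

end DslopeQuotient

lemma integral_half_smul_add_comp_neg {E : Type*} [NormedAddCommGroup E] [NormedSpace ℝ E]
    {f : ℝ → E} (hf : Integrable f) :
    ∫ x, (1 / 2 : ℝ) • (f x + f (-x)) = ∫ x, f x := by
  rw [integral_smul, integral_add hf hf.comp_neg, integral_neg_eq_self, ← two_smul ℝ, smul_smul,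
    one_div_mul_cancel two_ne_zero, one_smul]

lemma exists_norm_cexp_quadratic_le {a : ℂ} (ha : a.re < 0) (b : ℂ) (Y : ℝ) :
    ∃ C, ∀ w : ℂ, |w.im| ≤ Y → ‖cexp (a * w ^ 2 + b * w)‖ ≤ C := by
  set L := 2 * |a.im| * Y + |b.re| with hL
  set M := -a.re * Y ^ 2 + |b.im| * Y
  refine ⟨Real.exp (L ^ 2 / (4 * -a.re) + M), fun w hw => ?_⟩
  rw [Complex.norm_exp, Real.exp_le_exp]
  have hre : (a * w ^ 2 + b * w).re =
      a.re * w.re ^ 2 + (-a.re * w.im ^ 2 + -(b.im * w.im)) +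
        (-(2 * a.im * w.im * w.re) + b.re * w.re) := by
    simp only [add_re, mul_re, sq, mul_im]
    ring
  have hsq : -a.re * w.im ^ 2 ≤ -a.re * Y ^ 2 := by
    rw [← sq_abs w.im]
    gcongr
    linarith
  have him : -(b.im * w.im) ≤ |b.im| * Y := by
    refine (neg_le_abs _).trans ?_
    rw [abs_mul]
    gcongr
  have hlin : -(2 * a.im * w.im * w.re) + b.re * w.re ≤ L * |w.re| := by
    refine (le_abs_self _).trans ((abs_add_le _ _).trans ?_)
    rw [abs_neg, abs_mul, abs_mul, abs_mul, abs_mul, abs_two, hL, add_mul]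
    gcongr
  have hvertex : a.re * w.re ^ 2 + L * |w.re| ≤ L ^ 2 / (4 * -a.re) := by
    rw [le_div_iff₀ (by linarith), ← sq_abs w.re]
    linarith [sq_nonneg (2 * a.re * |w.re| + L)]
  linarith

section SinhQuotient

variable {a : ℂ}

/-- The function `w ↦ (exp (a w² + b w) - 1) / sinh (π w)`, with its removable singularity at `0`
filled in. Subtracting `1` from the exponential is what lets the contour run through `0`. -/
noncomputable def sinhQuotient (a b w : ℂ) : ℂ :=
  dslope (fun w => cexp (a * w ^ 2 + b * w)) 0 w / dslope (fun w => Complex.sinh (π * w)) 0 w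

lemma sinhQuotient_of_ne_zero (a b : ℂ) {w : ℂ} (hw : w ≠ 0) :
    sinhQuotient a b w = (cexp (a * w ^ 2 + b * w) - 1) / Complex.sinh (π * w) := by
  rw [sinhQuotient, dslope_div_dslope_of_ne _ _ hw]
  simp

lemma differentiableOn_sinhQuotient (a b : ℂ) :
    DifferentiableOn ℂ (sinhQuotient a b) {w | |w.im| < 1} := by
  have hopen : IsOpen {w : ℂ | |w.im| < 1} := isOpen_lt (by fun_prop) continuous_const
  have hderiv : HasDerivAt (fun w : ℂ => Complex.sinh (π * w)) π 0 := by
    simpa using ((hasDerivAt_id (0 : ℂ)).const_mul (π : ℂ)).csinh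
  refine differentiableOn_dslope_div_dslope (hopen.mem_nhds (by simp)) (by fun_prop) (by fun_prop)
    (hderiv.deriv.trans_ne (ofReal_ne_zero.2 Real.pi_ne_zero)) fun w hw hw₀ => ?_
  rw [mul_zero, Complex.sinh_zero]
  exact sinh_pi_mul_ne_zero hw hw₀

lemma exists_norm_sinhQuotient_le (ha : a.re < 0) (b : ℂ) (Y : ℝ) :
    ∃ C, ∀ w : ℂ, 1 ≤ |w.re| → |w.im| ≤ Y →
      ‖sinhQuotient a b w‖ ≤ C * (Real.cosh (π * w.re))⁻¹ := by
  obtain ⟨C, hC⟩ := exists_norm_cexp_quadratic_le ha b Y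
  refine ⟨(C + 1) * 2, fun w hre him => ?_⟩
  have hnum : ‖cexp (a * w ^ 2 + b * w) - 1‖ ≤ C + 1 := by
    refine (norm_sub_le _ _).trans ?_
    rw [norm_one]
    gcongr
    exact hC w him
  have hone : 1 ≤ |π * w.re| := by
    rw [abs_mul, abs_of_pos Real.pi_pos]
    exact one_le_mul_of_one_le_of_one_le (by linarith [Real.pi_gt_three]) hre
  have hdenom : Real.cosh (π * w.re) / 2 ≤ ‖Complex.sinh (π * w)‖ := by
    have h := abs_sinh_re_le_norm_sinh (π * w)
    rw [re_ofReal_mul] at h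
    linarith [cosh_le_two_mul_abs_sinh hone]
  have hw₀ : w ≠ 0 := by
    rintro rfl
    simp [zero_lt_one.not_ge] at hre
  calc ‖sinhQuotient a b w‖
      ≤ (C + 1) / (Real.cosh (π * w.re) / 2) := by
        rw [sinhQuotient_of_ne_zero a b hw₀, norm_div]
        have hC₁ : 0 ≤ C + 1 := (norm_nonneg _).trans hnum
        gcongr
    _ = (C + 1) * 2 * (Real.cosh (π * w.re))⁻¹ := by
        field_simp

lemma half_smul_sinhQuotient_add_neg (a b : ℂ) {w : ℂ} (hw : w ≠ 0) :
    (1 / 2 : ℝ) • (sinhQuotient a b w + sinhQuotient a b (-w)) =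
      cexp (a * w ^ 2) * (Complex.sinh (b * w) / Complex.sinh (π * w)) := by
  rw [sinhQuotient_of_ne_zero a b hw, sinhQuotient_of_ne_zero a b (neg_ne_zero.2 hw), neg_sq,
    mul_neg, mul_neg, Complex.sinh_neg, Complex.exp_add, Complex.exp_add,
    Complex.sinh.eq_def (b * w), real_smul]
  push_cast
  ring

lemma cexp_add_half_I_div_cosh (a b : ℂ) (x : ℝ) :
    cexp (a * (x + (1 / 2 : ℝ) * I) ^ 2 + b * (x + (1 / 2 : ℝ) * I)) / Complex.cosh (π * x) =
      I * sinhQuotient a b (x + (1 / 2 : ℝ) * I) + ((Real.cosh (π * x))⁻¹ : ℝ) := by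
  have hne : (x + (1 / 2 : ℝ) * I : ℂ) ≠ 0 := fun h => by simpa using congrArg im h
  rw [sinhQuotient_of_ne_zero a b hne, sinh_pi_mul_add_half_I, ← mul_div_assoc,
    mul_div_mul_left _ _ I_ne_zero, sub_div, ofReal_inv, ofReal_cosh, ofReal_mul, inv_eq_one_div,
    sub_add_cancel]

lemma integrable_inv_cosh_pi_mul : Integrable fun x : ℝ => (Real.cosh (π * x))⁻¹ :=
  integrable_inv_cosh.comp_mul_left' Real.pi_ne_zero

lemma integral_inv_cosh_pi_mul : ∫ x : ℝ, (Real.cosh (π * x))⁻¹ = 1 := by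
  rw [Measure.integral_comp_mul_left (fun x => (Real.cosh x)⁻¹), integral_inv_cosh, abs_inv,
    abs_of_pos Real.pi_pos, smul_eq_mul, inv_mul_cancel₀ Real.pi_ne_zero]

lemma tendsto_inv_cosh_pi_mul_cocompact :
    Tendsto (fun x : ℝ => (Real.cosh (π * x))⁻¹) (cocompact ℝ) (𝓝 0) :=
  tendsto_inv_cosh_cocompact.comp
    (Homeomorph.mulLeft₀ π Real.pi_ne_zero).isClosedEmbedding.tendsto_cocompact

lemma exists_eventually_norm_sinhQuotient_le (ha : a.re < 0) (b : ℂ) (Y : ℝ) :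
    ∃ C, ∀ᶠ x : ℝ in cocompact ℝ, ∀ y ∈ [[0, Y]],
      ‖sinhQuotient a b (x + y * I)‖ ≤ C * (Real.cosh (π * x))⁻¹ := by
  obtain ⟨C, hC⟩ := exists_norm_sinhQuotient_le ha b |Y|
  refine ⟨C, ?_⟩
  filter_upwards [tendsto_norm_cocompact_atTop.eventually_ge_atTop 1] with x hx y hy
  have hre : (x + y * I : ℂ).re = x := by simp
  have him : (x + y * I : ℂ).im = y := by simp
  have hy' : |y| ≤ |Y| := by simpa using abs_sub_left_of_mem_uIcc hy
  simpa only [hre] using hC (x + y * I) (by rwa [hre]) (by rwa [him])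

lemma differentiableOn_sinhQuotient_im_preimage_uIcc (a b : ℂ) {y : ℝ} (hy : |y| < 1) :
    DifferentiableOn ℂ (sinhQuotient a b) (im ⁻¹' [[0, y]]) := by
  refine (differentiableOn_sinhQuotient a b).mono fun w hw => ?_
  have him : |w.im| ≤ |y| := by simpa using abs_sub_left_of_mem_uIcc hw
  exact him.trans_lt hy

lemma integrable_sinhQuotient_add_mul_I (ha : a.re < 0) (b : ℂ) {y : ℝ} (hy : |y| < 1) :
    Integrable fun x : ℝ => sinhQuotient a b (x + y * I) := by
  obtain ⟨C, hC⟩ := exists_eventually_norm_sinhQuotient_le ha b y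
  exact integrable_comp_add_mul_I
    (differentiableOn_sinhQuotient_im_preimage_uIcc a b hy).continuousOn hC
    (integrable_inv_cosh_pi_mul.const_mul C) right_mem_uIcc

lemma integral_sinhQuotient (ha : a.re < 0) (b : ℂ) :
    ∫ x : ℝ, sinhQuotient a b x =
      ∫ x : ℝ, cexp (a * x ^ 2) * (Complex.sinh (b * x) / Complex.sinh (π * x)) := by
  have hint : Integrable fun x : ℝ => sinhQuotient a b x := by
    simpa using integrable_sinhQuotient_add_mul_I ha b (y := 0) (by simp)
  rw [← integral_half_smul_add_comp_neg hint]
  refine integral_congr_ae ?_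
  filter_upwards [volume.ae_ne (0 : ℝ)] with x hx
  rw [ofReal_neg, half_smul_sinhQuotient_add_neg a b (ofReal_ne_zero.2 hx)]

lemma integral_sinhQuotient_add_mul_I (ha : a.re < 0) (b : ℂ) {y : ℝ} (hy : |y| < 1) :
    ∫ x : ℝ, sinhQuotient a b (x + y * I) = ∫ x : ℝ, sinhQuotient a b x := by
  obtain ⟨C, hC⟩ := exists_eventually_norm_sinhQuotient_le ha b y
  have hlim : Tendsto (fun x : ℝ => C * (Real.cosh (π * x))⁻¹) (cocompact ℝ) (𝓝 0) := by
    simpa only [mul_zero] using tendsto_inv_cosh_pi_mul_cocompact.const_mul C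
  have hshift := integral_comp_add_mul_I_eq
    (differentiableOn_sinhQuotient_im_preimage_uIcc a b hy) hC
    (integrable_inv_cosh_pi_mul.const_mul C) hlim
  simpa only [ofReal_zero, zero_mul, add_zero] using hshift.symm

theorem integral_cexp_add_half_I_div_cosh (ha : a.re < 0) (b : ℂ) :
    ∫ x : ℝ, cexp (a * (x + (1 / 2 : ℝ) * I) ^ 2 + b * (x + (1 / 2 : ℝ) * I)) /
        Complex.cosh (π * x) =
      I * (∫ x : ℝ, cexp (a * x ^ 2) * (Complex.sinh (b * x) / Complex.sinh (π * x))) + 1 := by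
  have hhalf : |(1 / 2 : ℝ)| < 1 := by norm_num [abs_of_pos]
  have hcosh : Integrable fun x : ℝ => (((Real.cosh (π * x))⁻¹ : ℝ) : ℂ) :=
    integrable_inv_cosh_pi_mul.ofReal
  simp only [cexp_add_half_I_div_cosh]
  rw [integral_add ((integrable_sinhQuotient_add_mul_I ha b hhalf).const_mul I) hcosh,
    integral_const_mul, integral_sinhQuotient_add_mul_I ha b hhalf, integral_sinhQuotient ha,
    integral_complex_ofReal, integral_inv_cosh_pi_mul, ofReal_one]

end SinhQuotient

theorem cexp_mul_mordellH {τ : ℂ} (hτ : 0 < τ.im) (b : ℂ) :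
    cexp (2 * π * I * (-τ / 8 + b / 2)) * mordellH (τ / 2 - b) τ =
      I * (∫ x : ℝ, cexp (π * I * τ * x ^ 2) *
        (Complex.sinh (2 * π * b * x) / Complex.sinh (π * x))) + 1 := by
  have hre : (π * I * τ).re < 0 := by
    rw [mul_assoc, re_ofReal_mul, I_mul_re]
    exact mul_neg_of_pos_of_neg Real.pi_pos (neg_neg_of_pos hτ)
  rw [← integral_cexp_add_half_I_div_cosh hre, mordellH, ← integral_const_mul]
  congr 1 with x
  rw [← mul_div_assoc, ← Complex.exp_add]
  congr 2
  push_cast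
  linear_combination (-π * I * τ / 4 - π * τ * x : ℂ) * I_sq

/-! ### The period integral -/

lemma gUnary_one_I_mul_div_cpow_half (β : ℝ) (τ : ℂ) {t : ℝ} (ht : 0 < t) :
    gUnary 1 β (I * t) / (-I * (I * t + τ)) ^ (1 / 2 : ℂ) =
      I * ((HurwitzZeta.sinKernel β t : ℂ) / (t + -I * τ) ^ (1 / 2 : ℂ)) := by
  have hbase : -I * (I * t + τ) = t + -I * τ := by linear_combination -(t : ℂ) * I_sq
  rw [gUnary_one_I_mul _ ht, mul_div_assoc, hbase]

lemma integral_sinKernel_add_half_div_cpow_half {b : ℝ} (hb₁ : -(1 / 2) < b) (hb₂ : b < 1 / 2)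
    {τ : ℂ} (hτ : 0 < τ.im) :
    ∫ t in Ioi (0 : ℝ), (HurwitzZeta.sinKernel (b + 1 / 2 : ℝ) t : ℂ) /
        (t + -I * τ) ^ (1 / 2 : ℂ) =
      -∫ x : ℝ, cexp (π * I * τ * x ^ 2) *
        (Complex.sinh (2 * π * b * x) / Complex.sinh (π * x)) := by
  rw [integral_sinKernel_div_cpow_half (by linarith) (by linarith) (by simpa using hτ),
    ← integral_neg]
  congr 1 with x
  rw [← mul_neg, ← neg_div, ← Complex.sinh_neg]
  push_cast
  ring_nf

/-- Lemma 2.7(ii): for `b ∈ (−1/2,1/2) ∖ {0}` and `τ ∈ ℍ`,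
`∫_0^{i∞} g_{1,b+1/2}(z)/√(−i(z+τ)) dz = −i e(−τ/8 + b/2) h(τ/2 − b; τ) + i`. -/
theorem eichler_g1_h (τ : ℂ) (hτ : 0 < τ.im) (b : ℝ)
    (hb₁ : -(1/2) < b) (hb₂ : b < 1/2) (hb₀ : b ≠ 0) :
    MeasureTheory.IntegrableOn
      (fun t : ℝ => gUnary 1 (b + 1/2) (I * t) / ((-I * (I * t + τ)) ^ ((1 : ℂ)/2)))
      (Set.Ioi 0) ∧
    I * ∫ t in Set.Ioi (0 : ℝ),
        gUnary 1 (b + 1/2) (I * t) / ((-I * (I * t + τ)) ^ ((1 : ℂ)/2)) =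
      -I * Complex.exp (2 * (Real.pi : ℂ) * I * (-τ/8 + (b : ℂ)/2)) *
        mordellH (τ/2 - (b : ℂ)) τ + I := by
  have hz : 0 < (-I * τ).re := by simpa using hτ
  have hintegrand : EqOn
      (fun t : ℝ => gUnary 1 (b + 1 / 2) (I * t) / (-I * (I * t + τ)) ^ (1 / 2 : ℂ))
      (fun t : ℝ => I * ((HurwitzZeta.sinKernel (b + 1 / 2 : ℝ) t : ℂ) /
        (t + -I * τ) ^ (1 / 2 : ℂ))) (Ioi 0) :=
    fun t ht => gUnary_one_I_mul_div_cpow_half _ τ ht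
  have hint := integrableOn_div_cpow_half (integrableOn_sinKernel (b + 1 / 2 : ℝ)).ofReal hz
  refine ⟨IntegrableOn.congr_fun (hint.integrable.const_mul I) hintegrand.symm measurableSet_Ioi,
    ?_⟩
  rw [setIntegral_congr_fun measurableSet_Ioi hintegrand, integral_const_mul,
    integral_sinKernel_add_half_div_cpow_half hb₁ hb₂ hτ, neg_mul I, neg_mul, mul_assoc I,
    cexp_mul_mordellH hτ]
  ring
end
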